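/- Invariance of the Schur lattice under the integral form of U_q(ŝl₂): for i ∈ {0,1}, let ℒ_i ⊆ W_i be the ℤ[q,q^{−1}]-submodule spanned by the vectors s_λ e^{mα}e^{iα/2} (λ a partition, m ∈ ℤ). Then ℒ_i is invariant under all divided powers of the Chevalley generators: e₁^{(r)}(ℒ_i) ⊆ ℒ_i, f₁^{(r)}(ℒ_i) ⊆ ℒ_i, e₀^{(r)}(ℒ_i) ⊆ ℒ_i, and f₀^{(r)}(ℒ_i) ⊆ ℒ_i for all r ≥ 1, where e₁ := X₀^+, f₁ := X₀^−, e₀ := X₁^− ∘ q^{−∂}, f₀ := q^{∂} ∘ X_{−1}^+. -/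

import Mathlib

/-!
The lattice is the set of all `∑ P_m e^{mα}` whose coefficients `P_m` lie in the ring
`ℤ[q^{±1}][h₁, h₂, …]`: Schur functions and products of `h_k` span the same
`ℤ[q^{±1}]`-module, since the Jacobi–Trudi expansion is unitriangular (`prod_hhF_mem`,
`mem_lattice_iff`).

Each current acts on a coefficient by a translation `p_n ↦ p_n + c_n z^{-n}`, followed by
multiplication with a series `exp (∑ v_n p_n zⁿ/n)` and extraction of one coefficient
(`DopF_genFamF`, `xop_eq_sum`). Moving the translation of one factor past the series of another
produces `(z_j - z_i)(z_j - s z_i)` with `s = q^{∓2}` (`transl_extZ`, `xop_psi`). The `r`-fold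
product is therefore the coefficient functional `psi` applied to
`∏_{i<j} (z_j - z_i)(z_j - s z_i) · T_r P`, where `T_r P` is the simultaneous translation; the
shift by `e^{±α}` changes the modes so that all variables enter with the same exponent
(`xcomp_eq`).

Everything but `∏ (z_j - s z_i)` is then antisymmetric, so that `f ↦ psi (Vandermonde · f · T_r P)`
is an alternating functional (`isAlt_psiMul`). On polynomials of the degree of
`∏ (z_j - s z_i)`, an alternating functional is determined by its value on the staircase monomial
`z^δ` (`isAlt_const`). The resulting universal constant is found by evaluating the alternating sum
at a geometric progression in `s` (`altEval_qvdm`, `altEval_stairMon`, `qvdm_geom`); it is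
`q^e [r]!` (`isAlt_qvdm`). Division by `[r]!` leaves `q^e psi (Vandermonde · z^δ · T_r P)`, which
is integral because both the translation and the series preserve integrality (`translN_mem`,
`psi_mem`, `xcomp_mem`). The operators `q^{±∂}` contribute only powers of `q` (`divpow_mem`,
`che0_eq`, `chf0_eq`).
-/

open MvPolynomial

noncomputable section

/-- The base field `F = ℚ(q)`. -/
abbrev Fq : Type := RatFunc ℚ

/-- The indeterminate `q ∈ ℚ(q)`. -/
def qq : Fq := RatFunc.X

/-- `Λ_F = F[p₁,p₂,…]`, with the variable `X n` (for `n : ℕ+`) the power sum `p_n`. -/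
abbrev LamF : Type := MvPolynomial ℕ+ Fq

/-- The power sum `p_n`. -/
def ppF (n : ℕ+) : LamF := X n

/-- The family `g` with generating function `∑_k g_k t^k = exp (∑_{n≥1} c n · p_n tⁿ/n)`,
characterized by `g 0 = 1` and the recursion obtained by differentiating:
`(k+1) · g (k+1) = ∑_{i=0}^{k} c (i+1) · p_{i+1} · g (k−i)`. -/
def genFamF (c : ℕ → Fq) : ℕ → LamF
  | 0 => 1
  | (k+1) => (((k : Fq) + 1)⁻¹) •
      ∑ i ∈ Finset.range (k+1), c (i+1) • (ppF ⟨i+1, Nat.succ_pos i⟩ * genFamF c (k - i))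
  decreasing_by exact Nat.lt_succ_of_le (Nat.sub_le k i)

/-- The complete homogeneous symmetric function `h_k`. -/
def hhF : ℕ → LamF := genFamF fun _ => 1

/-- The elementary symmetric function `e_k`. -/
def eeF : ℕ → LamF := genFamF fun n => (-1)^(n+1)

/-- `h` indexed by `ℤ` (zero in negative degrees). -/
def hZF (n : ℤ) : LamF := if 0 ≤ n then hhF n.toNat else 0

/-- `e` indexed by `ℤ` (zero in negative degrees). -/
def eZF (n : ℤ) : LamF := if 0 ≤ n then eeF n.toNat else 0

/-- The creation coefficients of `X⁺(z)`:
`exp (∑ ((1+q^{2n})q^{−n}/n)·p_n·zⁿ) = ∑_k HpF k · z^k`. -/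
def HpF : ℕ → LamF := genFamF fun n => (1 + qq ^ (2*n)) * (qq⁻¹) ^ n

/-- `HpF` indexed by `ℤ`. -/
def HZp (n : ℤ) : LamF := if 0 ≤ n then HpF n.toNat else 0

/-- The annihilation avatars for `X⁺(z)`: since
`(1+q^{2n})q^{−n}/n · a_n = q^{−n}·∂/∂p_n`, the coefficient of `z^{−j}` in
`exp (−∑ ((1+q^{2n})q^{−n}/n)·a_n·z^{−n})` is `ApF j` with `p_i ↦ i·∂/∂p_i`
substituted, where `∑_k ApF k t^k = exp (−∑ q^{−n} p_n tⁿ/n)`. -/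
def ApF : ℕ → LamF := genFamF fun n => -((qq⁻¹) ^ n)

/-- The creation coefficients of `X⁻(z)`:
`exp (−∑ ((1+q^{2n})/n)·p_n·zⁿ) = ∑_k HmF k · z^k`. -/
def HmF : ℕ → LamF := genFamF fun n => -(1 + qq ^ (2*n))

/-- `HmF` indexed by `ℤ`. -/
def HZm (n : ℤ) : LamF := if 0 ≤ n then HmF n.toNat else 0

/-- The differential operator `∏_i (i·∂/∂p_i)^(α i)`. -/
def monOpF (α : ℕ+ →₀ ℕ) : Module.End Fq LamF :=
  ((α.support.sort (· ≤ ·)).map fun (i : ℕ+) =>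
    (((i : ℕ) : Fq) • (pderiv i).toLinearMap) ^ (α i)).prod

/-- `f(∂) P`: substitute `p_i ↦ i·∂/∂p_i` in `f` and apply to `P`. -/
def DopF (f : LamF) (P : LamF) : LamF := ∑ α ∈ f.support, f.coeff α • monOpF α P

/-- Bound for the weighted degree of `P` (weight of `p_i` is `i`). -/
def wboundF (P : LamF) : ℕ := P.support.sup fun α => α.sum fun i k => (i : ℕ) * k

/-- The level-one Fock space `W_i = Λ_F ⊗ F[ℤα]e^{iα/2}`, realized as `ℤ →₀ Λ_F`;
`Finsupp.single m P` represents `P·e^{mα}e^{iα/2}`. -/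
abbrev W : Type := ℤ →₀ LamF

/-- The Drinfeld current component `X_n^+` on `W_i` (the parameter `i ∈ {0,1}` enters
through `z^∂ e^{mα}e^{iα/2} = z^{2m+i} e^{mα}e^{iα/2}`): the coefficient of `z^{−n−1}` in
`X⁺(z) = exp(∑((1+q^{2n})q^{−n}/n)a_{−n}zⁿ)·exp(−∑((1+q^{2n})q^{−n}/n)a_n z^{−n})·e^α z^∂`,
i.e. `X_n^+(P·e^{mα}) = ∑_j HpF_{j−n−1−2m−i} · (ApF j)(∂) P · e^{(m+1)α}`
(only the finitely many `j ≤ wboundF P` contribute). -/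
def Xp (i n : ℤ) (w : W) : W :=
  w.sum fun m P => Finsupp.single (m+1)
    (∑ j ∈ Finset.range (wboundF P + 1),
      HZp ((j : ℤ) - n - 1 - 2*m - i) * DopF (ApF j) P)

/-- The Drinfeld current component `X_n^-` on `W_i`: the coefficient of `z^{−n−1}` in
`X⁻(z) = exp(−∑((1+q^{2n})/n)a_{−n}zⁿ)·exp(∑((1+q^{2n})/n)a_n z^{−n})·e^{−α} z^{−∂}`,
i.e. `X_n^-(P·e^{mα}) = ∑_j HmF_{j+2m+i−n−1} · h_j(∂) P · e^{(m−1)α}`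
(here `(1+q^{2n})/n · a_n = ∂/∂p_n`, whose generating family is `h`). -/
def Xm (i n : ℤ) (w : W) : W :=
  w.sum fun m P => Finsupp.single (m-1)
    (∑ j ∈ Finset.range (wboundF P + 1),
      HZm ((j : ℤ) + 2*m + i - n - 1) * DopF (hhF j) P)

/-- The `q`-factorial `[r]! = ∏_{k=1}^r (q^k − q^{−k})/(q − q^{−1})`. -/
def qfact (r : ℕ) : Fq := ∏ k ∈ Finset.range r, (qq ^ (k+1) - (qq⁻¹) ^ (k+1)) / (qq - qq⁻¹)

/-- The divided power `x^{(r)} = x^r / [r]!` of an operator on `W`. -/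
def divpow (f : W → W) (r : ℕ) (w : W) : W := (qfact r)⁻¹ • (f^[r] w)

/-- Schur function of an integer tuple: `s_ρ = det (h_{ρ_i − i + j})`. -/
def schurF {l : ℕ} (ρ : Fin l → ℤ) : LamF :=
  (Matrix.of fun i j : Fin l => hZF (ρ i - (i.1 : ℤ) + (j.1 : ℤ))).det

/-- Dual Schur function of an integer tuple: `s_{ρ'} = det (e_{ρ_i − i + j})`. -/
def schurEF {l : ℕ} (ρ : Fin l → ℤ) : LamF :=
  (Matrix.of fun i j : Fin l => eZF (ρ i - (i.1 : ℤ) + (j.1 : ℤ))).det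

/-- `q^{±∂}`: `q^{ε∂}(P·e^{mα}e^{iα/2}) = q^{ε(2m+i)}·P·e^{mα}e^{iα/2}`. -/
def qd (i ε : ℤ) (w : W) : W := w.sum fun m P => Finsupp.single m (qq ^ (ε * (2*m + i)) • P)

/-- The Chevalley generator `e₁ = X₀⁺`. -/
def che1 (i : ℤ) : W → W := Xp i 0
/-- The Chevalley generator `f₁ = X₀⁻`. -/
def chf1 (i : ℤ) : W → W := Xm i 0
/-- The Chevalley generator `e₀ = X₁⁻ ∘ q^{−∂}`. -/
def che0 (i : ℤ) (w : W) : W := Xm i 1 (qd i (-1) w)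
/-- The Chevalley generator `f₀ = q^∂ ∘ X₋₁⁺`. -/
def chf0 (i : ℤ) (w : W) : W := qd i 1 (Xp i (-1) w)

/-- The `ℤ[q,q⁻¹]`-lattice `ℒ ⊆ W` spanned by the vectors `s_λ e^{mα}e^{iα/2}`
(`λ` a partition, `m ∈ ℤ`): equivalently, the additive subgroup generated by all
`q^k · s_λ e^{mα}e^{iα/2}` with `k ∈ ℤ`. -/
def SchurLattice : AddSubgroup W :=
  AddSubgroup.closure
    {w | ∃ (k m : ℤ) (l : ℕ) (lam : Fin l → ℕ), Antitone lam ∧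
      w = qq ^ k • Finsupp.single m (schurF fun a => (lam a : ℤ))}

/-! ### Differential operators -/

/-- The operator `n·∂/∂p_n` on `Λ_F`. -/
def scaledPderiv (n : ℕ+) : Module.End Fq LamF := ((n : ℕ) : Fq) • (pderiv n).toLinearMap

lemma scaledPderiv_comm (m n : ℕ+) :
    scaledPderiv m * scaledPderiv n = scaledPderiv n * scaledPderiv m := by
  refine LinearMap.ext fun P => ?_
  have h : pderiv m (pderiv n P) = pderiv n (pderiv m P) := by
    have h0 : ⁅(pderiv m : Derivation Fq LamF LamF), (pderiv n : Derivation Fq LamF LamF)⁆ = 0 := by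
      refine MvPolynomial.derivation_ext fun i => ?_
      rw [Derivation.commutator_apply, pderiv_X, pderiv_X]
      simp only [Pi.single_apply]
      split_ifs <;> simp
    have h1 := congrArg (fun D : Derivation Fq LamF LamF => D P) h0
    simpa [Derivation.commutator_apply, sub_eq_zero] using h1
  simp only [scaledPderiv, Module.End.mul_apply, LinearMap.smul_apply, Derivation.coeFn_coe,
    map_smul, h]
  rw [smul_comm]

open scoped IsMulCommutative in
/-- `DopF (·) P` turns multiplication by `p_n` in the symbol into `n·∂/∂p_n`: the operators
commute, so symbols act through a commutative subalgebra of the endomorphisms. -/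
lemma exists_DopF_hom : ∃ Φ : LamF →ₐ[Fq] Module.End Fq LamF,
    (∀ n, Φ (X n) = scaledPderiv n) ∧ ∀ f P, DopF f P = Φ f P := by
  have hc : ∀ a ∈ Set.range scaledPderiv, ∀ b ∈ Set.range scaledPderiv, a * b = b * a := by
    rintro _ ⟨m, rfl⟩ _ ⟨n, rfl⟩
    exact scaledPderiv_comm m n
  let S := Algebra.adjoin Fq (Set.range scaledPderiv)
  have : IsMulCommutative S := Algebra.isMulCommutative_adjoin Fq hc
  let x : ℕ+ → S := fun n => ⟨scaledPderiv n, Algebra.subset_adjoin ⟨n, rfl⟩⟩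
  refine ⟨S.val.comp (aeval x), fun n => by simp [x], fun f P => ?_⟩
  have hmon : ∀ α : ℕ+ →₀ ℕ, monOpF α = S.val (α.prod fun i k => x i ^ k) := by
    intro α
    have : (α.prod fun i k => x i ^ k)
        = ((α.support.sort (· ≤ ·)).map fun i => x i ^ α i).prod := by
      rw [Finsupp.prod, ← List.prod_toFinset _ (Finset.sort_nodup _ _), Finset.sort_toFinset]
    rw [this, map_list_prod, List.map_map]
    rfl
  rw [AlgHom.comp_apply, aeval_def, eval₂_eq, DopF, map_sum, LinearMap.sum_apply]
  refine Finset.sum_congr rfl fun α _ => ?_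
  rw [map_mul, AlgHom.commutes, Module.End.mul_apply, Module.algebraMap_end_apply, hmon,
    Finsupp.prod]

/-! ### The exponential families -/

lemma ode_unique {B : Type*} [CommRing B] [IsDomain B] [CharZero B] {A G K : PowerSeries B}
    (hG : PowerSeries.derivative B G = A * G) (hK : PowerSeries.derivative B K = A * K)
    (h0 : PowerSeries.constantCoeff G = PowerSeries.constantCoeff K) : G = K := by
  ext n
  induction n using Nat.strong_induction_on with
  | _ n ih =>
    cases n with
    | zero => simpa using h0
    | succ n =>
      have h1 := congrArg (PowerSeries.coeff n) hG
      have h2 := congrArg (PowerSeries.coeff n) hK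
      rw [PowerSeries.coeff_derivative, PowerSeries.coeff_mul] at h1 h2
      have h3 : ∑ p ∈ Finset.HasAntidiagonal.antidiagonal n, PowerSeries.coeff p.1 A * PowerSeries.coeff p.2 G
          = ∑ p ∈ Finset.HasAntidiagonal.antidiagonal n, PowerSeries.coeff p.1 A * PowerSeries.coeff p.2 K := by
        refine Finset.sum_congr rfl fun p hp => ?_
        rw [ih p.2 (Nat.lt_succ_of_le (by have := Finset.HasAntidiagonal.mem_antidiagonal.1 hp; omega))]
      have hn : ((n : B) + 1) ≠ 0 := by exact_mod_cast Nat.succ_ne_zero n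
      exact mul_right_cancel₀ hn (h1.trans (h3.trans h2.symm))

/-- The generating series of `genFamF c`. -/
def genSer (c : ℕ → Fq) : PowerSeries LamF := PowerSeries.mk (genFamF c)

/-- The logarithmic derivative `∑ c_{n+1} p_{n+1} tⁿ` of `genSer c`. -/
def logSer (c : ℕ → Fq) : PowerSeries LamF :=
  PowerSeries.mk fun n => c (n + 1) • ppF n.succPNat

lemma genFamF_zero (c : ℕ → Fq) : genFamF c 0 = 1 := by rw [genFamF]

lemma genFamF_succ (c : ℕ → Fq) (k : ℕ) : ((k : Fq) + 1) • genFamF c (k + 1) =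
    ∑ i ∈ Finset.range (k + 1), c (i + 1) • (ppF i.succPNat * genFamF c (k - i)) := by
  have hk : ((k : Fq) + 1) ≠ 0 := by exact_mod_cast Nat.succ_ne_zero k
  rw [genFamF, smul_smul, mul_inv_cancel₀ hk, one_smul]
  rfl

lemma genSer_ode (c : ℕ → Fq) :
    PowerSeries.derivative LamF (genSer c) = logSer c * genSer c := by
  ext1 n
  rw [PowerSeries.coeff_derivative, PowerSeries.coeff_mul,
    Finset.Nat.sum_antidiagonal_eq_sum_range_succ_mk]
  simp only [genSer, logSer, PowerSeries.coeff_mk, smul_mul_assoc]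
  rw [← genFamF_succ, Algebra.smul_def, mul_comm]
  simp

lemma constantCoeff_genSer (c : ℕ → Fq) : PowerSeries.constantCoeff (genSer c) = 1 := by
  rw [← PowerSeries.coeff_zero_eq_constantCoeff_apply, genSer, PowerSeries.coeff_mk, genFamF_zero]

lemma genSer_mul (c d : ℕ → Fq) : genSer c * genSer d = genSer fun n => c n + d n := by
  have h : logSer (fun n => c n + d n) = logSer c + logSer d := by
    refine PowerSeries.ext fun n => ?_
    simp [logSer, add_smul]
  refine ode_unique (A := logSer fun n => c n + d n) ?_ (genSer_ode _) ?_
  · rw [Derivation.leibniz, genSer_ode, genSer_ode, h, smul_eq_mul, smul_eq_mul]; ring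
  · simp [constantCoeff_genSer]

lemma genFamF_rescale (c : ℕ → Fq) (a : Fq) (k : ℕ) :
    genFamF (fun n => c n * a ^ n) k = a ^ k • genFamF c k := by
  induction k using Nat.strong_induction_on with
  | _ k ih =>
    cases k with
    | zero => simp [genFamF_zero]
    | succ k =>
      have hk : ((k : Fq) + 1) ≠ 0 := by exact_mod_cast Nat.succ_ne_zero k
      refine smul_right_injective LamF hk ?_
      simp only
      rw [genFamF_succ, smul_comm, genFamF_succ, Finset.smul_sum]
      refine Finset.sum_congr rfl fun i hi => ?_
      have hi' : i ≤ k := Nat.lt_succ_iff.1 (Finset.mem_range.1 hi)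
      rw [ih (k - i) (by omega), mul_smul_comm, smul_smul, smul_smul]
      congr 1
      rw [mul_assoc, ← pow_add, mul_comm]
      congr 2
      omega

lemma genFamF_const_zero (k : ℕ) : genFamF (fun _ => 0) k = if k = 0 then 1 else 0 := by
  cases k with
  | zero => simp [genFamF_zero]
  | succ k => rw [genFamF]; simp

/-! ### The translation homomorphism -/

/-- The translation `p_n ↦ p_n + c_n uⁿ`, i.e. `exp (∑ c_n uⁿ ∂/∂p_n)`, with values in
polynomials in `u`. -/
def transl (c : ℕ → Fq) : LamF →ₐ[Fq] Polynomial LamF :=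
  aeval fun n : ℕ+ => Polynomial.C (X n) + Polynomial.C (C (c n)) * Polynomial.X ^ (n : ℕ)

lemma transl_X (c : ℕ → Fq) (n : ℕ+) : transl c (X n) =
    Polynomial.C (X n) + Polynomial.C (C (c n)) * Polynomial.X ^ (n : ℕ) := by
  simp [transl]

lemma transl_C (c : ℕ → Fq) (a : Fq) : transl c (C a) = Polynomial.C (C a) := by
  simp only [transl, aeval_C]
  rfl

/-- `d/du` of the translation, modulo `u^N`. -/
lemma transl_derivative (c : ℕ → Fq) (N : ℕ) (P : LamF) : (Polynomial.X : Polynomial LamF) ^ N ∣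
    Polynomial.derivative (transl c P) - ∑ i ∈ Finset.range N,
      Polynomial.C (C (c (i + 1))) * Polynomial.X ^ i *
        transl c (scaledPderiv i.succPNat P) := by
  induction P using MvPolynomial.induction_on with
  | C a => simp [scaledPderiv]
  | add P Q hP hQ =>
    convert dvd_add hP hQ using 1
    simp only [map_add, mul_add, Finset.sum_add_distrib]
    ring
  | mul_X P n hP =>
    have hX : (Polynomial.X : Polynomial LamF) ^ N ∣
      Polynomial.derivative (transl c (X n)) - ∑ i ∈ Finset.range N,
      Polynomial.C (C (c (i + 1))) * Polynomial.X ^ i *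
        transl c (scaledPderiv i.succPNat (X n)) := by
      have hterm : ∀ i ∈ Finset.range N, Polynomial.C (C (c (i + 1))) * Polynomial.X ^ i *
          transl c (scaledPderiv i.succPNat (X n)) =
          if i = n.natPred then Polynomial.C (C (c n)) * Polynomial.C (C ((n : ℕ) : Fq)) *
            Polynomial.X ^ ((n : ℕ) - 1) else 0 := by
        intro i _
        have e : i.succPNat = n ↔ i = n.natPred := by
          rw [← PNat.coe_inj, Nat.succPNat_coe, Nat.succ_eq_add_one]
          have := PNat.natPred_add_one n
          omega
        split_ifs with h
        · have hn := e.2 h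
          have hn' : i + 1 = (n : ℕ) := by rw [← hn, Nat.succPNat_coe]
          have hn2 : (n : ℕ) - 1 = i := by omega
          rw [hn, hn2, ← hn']
          simp only [scaledPderiv, LinearMap.smul_apply, Derivation.coeFn_coe, pderiv_X_self,
            ← hn', MvPolynomial.smul_eq_C_mul, mul_one, transl_C]
          ring
        · have hn : ¬ (n = i.succPNat) := fun h' => h (e.1 h'.symm)
          simp [scaledPderiv, pderiv_X_of_ne hn]
      rw [Finset.sum_congr rfl hterm, Finset.sum_ite_eq', transl_X]
      simp only [Polynomial.derivative_add, Polynomial.derivative_C, zero_add,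
        Polynomial.derivative_C_mul, Polynomial.derivative_X_pow]
      split_ifs with h
      · simp [mul_assoc]
      · rw [sub_zero]
        refine Dvd.dvd.mul_left (Dvd.dvd.mul_left (pow_dvd_pow _ ?_) _) _
        have := PNat.natPred_add_one n
        simp at h
        omega
    have hleib : ∀ i, scaledPderiv i (P * X n) =
        scaledPderiv i P * X n + P * scaledPderiv i (X n) := by
      intro i
      simp only [scaledPderiv, LinearMap.smul_apply, Derivation.coeFn_coe, Derivation.leibniz,
        smul_add, smul_eq_mul, mul_smul_comm]
      rw [add_comm, mul_comm (X n), smul_mul_assoc]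
    convert dvd_add (Dvd.dvd.mul_left hP (transl c (X n)))
      (Dvd.dvd.mul_left hX (transl c P)) using 1
    simp only [map_mul, hleib, map_add, mul_add, Finset.sum_add_distrib,
      Polynomial.derivative_mul, mul_sub, Finset.mul_sum]
    have : ∀ a b d e : Polynomial LamF, a = d → b = e → ∀ x y, (x + y) - (a + b) =
       (x - d) + (y - e) := by rintro _ _ _ _ rfl rfl x y; ring
    rw [mul_comm (transl c (X n))]
    refine this _ _ _ _ ?_ ?_ _ _ <;> exact Finset.sum_congr rfl fun i _ => by ring

lemma transl_coeff_zero (c : ℕ → Fq) (P : LamF) : (transl c P).coeff 0 = P := by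
  induction P using MvPolynomial.induction_on with
  | C a => simp
  | add P Q hP hQ => simp [hP, hQ]
  | mul_X P n hP =>
    rw [map_mul, Polynomial.mul_coeff_zero, hP, transl_X]
    simp [Polynomial.coeff_X_pow, n.ne_zero.symm]

/-- Taylor's formula: the operator with symbol `genFamF c j` is the coefficient of `u^j` in the
translation. Both sides satisfy the same recursion in `j`. -/
lemma DopF_genFamF (c : ℕ → Fq) (j : ℕ) (P : LamF) :
    DopF (genFamF c j) P = (transl c P).coeff j := by
  obtain ⟨Φ, hX, hΦ⟩ := exists_DopF_hom
  rw [hΦ]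
  induction j using Nat.strong_induction_on generalizing P with
  | _ j ih =>
    cases j with
    | zero => simp [genFamF_zero, transl_coeff_zero]
    | succ k =>
      have hk : ((k : Fq) + 1) ≠ 0 := by exact_mod_cast Nat.succ_ne_zero k
      refine smul_right_injective LamF hk ?_
      simp only
      rw [← LinearMap.smul_apply, ← map_smul, genFamF_succ, map_sum, LinearMap.sum_apply]
      have h := (Polynomial.X_pow_dvd_iff.1 (transl_derivative c (k + 1) P)) k (Nat.lt_succ_self k)
      rw [Polynomial.coeff_sub, sub_eq_zero, Polynomial.coeff_derivative,
        Polynomial.finsetSum_coeff] at h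
      have h2 : ((k : Fq) + 1) • (transl c P).coeff (k + 1) =
          (transl c P).coeff (k + 1) * ((k : LamF) + 1) := by
        rw [Algebra.smul_def, mul_comm]; simp
      rw [h2, h]
      refine Finset.sum_congr rfl fun i hi => ?_
      have hi' : i ≤ k := Nat.lt_succ_iff.1 (Finset.mem_range.1 hi)
      rw [map_smul, mul_comm (ppF _), map_mul, ppF, hX, LinearMap.smul_apply,
        Module.End.mul_apply, ih (k - i) (by omega), mul_assoc, Polynomial.coeff_C_mul,
        Polynomial.coeff_X_pow_mul', if_pos hi', MvPolynomial.smul_eq_C_mul]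

lemma natDegree_transl_le (c : ℕ → Fq) (P : LamF) : (transl c P).natDegree ≤ wboundF P := by
  conv_lhs => rw [P.as_sum, map_sum]
  refine Polynomial.natDegree_sum_le_of_forall_le _ _ fun α hα => ?_
  refine le_trans ?_ (Finset.le_sup (f := fun α : ℕ+ →₀ ℕ => α.sum fun i k => (i : ℕ) * k) hα)
  rw [monomial_eq, map_mul, transl_C, Finsupp.prod, map_prod]
  refine (Polynomial.natDegree_C_mul_le _ _).trans ((Polynomial.natDegree_prod_le _ _).trans ?_)
  refine Finset.sum_le_sum fun i _ => ?_
  rw [map_pow, transl_X]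
  show _ ≤ (i : ℕ) * α i
  rw [mul_comm (i : ℕ)]
  refine Polynomial.natDegree_pow_le.trans (Nat.mul_le_mul_left _ ?_)
  refine (Polynomial.natDegree_add_le _ _).trans (max_le (by simp) ?_)
  exact (Polynomial.natDegree_C_mul_le _ _).trans (by simp)

/-! ### The integral form of the ring of symmetric functions -/

lemma qq_ne_zero : qq ≠ 0 := RatFunc.X_ne_zero

/-- The subring `ℤ[q,q⁻¹][h₁,h₂,…]` of `Λ_F`. -/
def intRing : Subring LamF := Subring.closure (Set.range hhF ∪ {C qq, C qq⁻¹})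

lemma hhF_mem (k : ℕ) : hhF k ∈ intRing := Subring.subset_closure (Or.inl ⟨k, rfl⟩)

lemma hZF_mem (k : ℤ) : hZF k ∈ intRing := by
  unfold hZF
  split_ifs
  exacts [hhF_mem _, zero_mem _]

lemma C_zpow_mem (k : ℤ) : (C (qq ^ k) : LamF) ∈ intRing := by
  have h1 : (C qq : LamF) ∈ intRing := Subring.subset_closure (Or.inr (by simp))
  have h2 : (C qq⁻¹ : LamF) ∈ intRing := Subring.subset_closure (Or.inr (by simp))
  cases k with
  | ofNat k => rw [Int.ofNat_eq_natCast, zpow_natCast, map_pow]; exact pow_mem h1 _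
  | negSucc k => rw [zpow_negSucc, ← inv_pow, map_pow]; exact pow_mem h2 _

lemma zpow_smul_mem (k : ℤ) {P : LamF} (hP : P ∈ intRing) : qq ^ k • P ∈ intRing := by
  rw [MvPolynomial.smul_eq_C_mul]
  exact mul_mem (C_zpow_mem k) hP

lemma genFamF_add_mem {c d : ℕ → Fq} (hc : ∀ k, genFamF c k ∈ intRing)
    (hd : ∀ k, genFamF d k ∈ intRing) (k : ℕ) : genFamF (fun n => c n + d n) k ∈ intRing := by
  have h := congrArg (PowerSeries.coeff k) (genSer_mul c d)
  rw [PowerSeries.coeff_mul] at h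
  simp only [genSer, PowerSeries.coeff_mk] at h
  rw [← h]
  exact sum_mem fun p _ => mul_mem (hc _) (hd _)

lemma genFamF_rescale_mem {c : ℕ → Fq} (hc : ∀ k, genFamF c k ∈ intRing) (e : ℤ) (k : ℕ) :
    genFamF (fun n => c n * (qq ^ e) ^ n) k ∈ intRing := by
  rw [genFamF_rescale, ← zpow_natCast, ← zpow_mul]
  exact zpow_smul_mem _ (hc k)

/-- Up to sign these are the elementary symmetric functions, determined recursively by
`(∑ h_k t^k)(∑ (-1)^k e_k t^k) = 1`. -/
lemma genFamF_neg_one_mem (k : ℕ) : genFamF (fun _ => -1) k ∈ intRing := by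
  induction k using Nat.strong_induction_on with
  | _ k ih =>
    cases k with
    | zero => rw [genFamF_zero]; exact one_mem _
    | succ k =>
      have h := congrArg (PowerSeries.coeff (k + 1)) (genSer_mul (fun _ => 1) fun _ => -1)
      rw [PowerSeries.coeff_mul, Finset.Nat.antidiagonal_succ, Finset.sum_cons] at h
      simp only [genSer, PowerSeries.coeff_mk, genFamF_zero, one_mul, add_neg_cancel,
        genFamF_const_zero, Nat.succ_ne_zero, if_false] at h
      rw [eq_neg_of_add_eq_zero_left h]
      refine neg_mem (sum_mem fun p hp => mul_mem (hhF_mem _) (ih _ ?_))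
      obtain ⟨p', hp', rfl⟩ := Finset.mem_map.1 hp
      have := Finset.HasAntidiagonal.mem_antidiagonal.1 hp'
      simp
      omega

lemma HpF_mem (k : ℕ) : HpF k ∈ intRing := by
  have h := genFamF_add_mem (genFamF_rescale_mem (c := fun _ => 1) hhF_mem (-1))
    (genFamF_rescale_mem (c := fun _ => 1) hhF_mem 1) k
  convert h using 1
  refine congrArg (fun c => genFamF c k) (funext fun n => ?_)
  have := qq_ne_zero
  rw [zpow_neg_one, zpow_one, two_mul, pow_add, inv_pow]
  field_simp

lemma HmF_mem (k : ℕ) : HmF k ∈ intRing := by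
  have h := genFamF_add_mem (genFamF_rescale_mem (c := fun _ => -1) genFamF_neg_one_mem 0)
    (genFamF_rescale_mem (c := fun _ => -1) genFamF_neg_one_mem 2) k
  convert h using 1
  refine congrArg (fun c => genFamF c k) (funext fun n => ?_)
  rw [zpow_zero, pow_mul]
  simp only [one_pow, zpow_ofNat]
  ring

/-! ### Translating the exponential families -/

lemma derivative_map {A B : Type*} [CommRing A] [CommRing B] (f : A →+* B) (G : PowerSeries A) :
    PowerSeries.derivative B (PowerSeries.map f G) =
      PowerSeries.map f (PowerSeries.derivative A G) := by
  refine PowerSeries.ext fun n => ?_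
  simp [PowerSeries.coeff_derivative]

lemma ode_mul {B : Type*} [CommRing B] {A L G K : PowerSeries B}
    (hG : PowerSeries.derivative B G = A * G) (hK : PowerSeries.derivative B K = L * K) :
    PowerSeries.derivative B (G * K) = (A + L) * (G * K) := by
  rw [Derivation.leibniz, hG, hK, smul_eq_mul, smul_eq_mul]
  ring

lemma transl_genSer (c v : ℕ → Fq) {K L : PowerSeries (Polynomial LamF)}
    (hK : PowerSeries.derivative _ K = L * K) (hK0 : PowerSeries.constantCoeff K = 1)
    (hL : ∀ n, PowerSeries.coeff n L =
      Polynomial.C (C (v (n + 1) * c (n + 1))) * Polynomial.X ^ (n + 1)) :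
    PowerSeries.map (transl c).toRingHom (genSer v) =
      PowerSeries.map Polynomial.C (genSer v) * K := by
  have hlog : PowerSeries.map (transl c).toRingHom (logSer v) =
      PowerSeries.map Polynomial.C (logSer v) + L := by
    refine PowerSeries.ext fun n => ?_
    rw [map_add, hL, PowerSeries.coeff_map, PowerSeries.coeff_map, logSer, PowerSeries.coeff_mk,
      ppF, MvPolynomial.smul_eq_C_mul]
    simp only [AlgHom.toRingHom_eq_coe, RingHom.coe_coe, map_mul, transl_C, transl_X,
      Nat.succPNat_coe, Nat.succ_eq_add_one]
    ring
  refine ode_unique (A := PowerSeries.map (transl c).toRingHom (logSer v)) ?_ ?_ ?_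
  · rw [derivative_map, genSer_ode, map_mul]
  · rw [hlog]
    refine ode_mul ?_ hK
    rw [derivative_map, genSer_ode, map_mul]
  · rw [map_mul, hK0, mul_one, ← PowerSeries.coeff_zero_eq_constantCoeff_apply,
      ← PowerSeries.coeff_zero_eq_constantCoeff_apply, PowerSeries.coeff_map,
      PowerSeries.coeff_map, PowerSeries.coeff_zero_eq_constantCoeff_apply,
      constantCoeff_genSer, map_one, map_one]

/-- The series `1 - b t`. -/
def linSer {B : Type*} [CommRing B] (b : B) : PowerSeries B :=
  1 - PowerSeries.C b * PowerSeries.X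

lemma linSer_ode {B : Type*} [CommRing B] (b : B) : PowerSeries.derivative B (linSer b) =
    (PowerSeries.mk fun n => -b ^ (n + 1)) * linSer b := by
  refine PowerSeries.ext fun n => ?_
  rw [linSer, mul_sub, mul_one, ← mul_assoc, map_sub, map_sub, map_sub, Derivation.leibniz]
  cases n with
  | zero => simp
  | succ n =>
    rw [PowerSeries.coeff_succ_mul_X]
    simp [pow_succ]

lemma constantCoeff_linSer {B : Type*} [CommRing B] (b : B) :
    PowerSeries.constantCoeff (linSer b) = 1 := by simp [linSer]

/-- Extension of a sequence by zero to negative indices. -/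
def extZ (V : ℕ → LamF) (n : ℤ) : LamF := if 0 ≤ n then V n.toNat else 0

/-- The contraction `V(w) ↦ V(w) (1 - w u)(1 - s w u)` between annihilation and creation parts. -/
lemma transl_extZ (c v : ℕ → Fq) (s : Fq) (hs : ∀ n, v n * c n = -(1 + s ^ n)) (b : ℤ) :
    transl c (extZ (genFamF v) b) = Polynomial.C (extZ (genFamF v) b)
      - Polynomial.C (C (1 + s) * extZ (genFamF v) (b - 1)) * Polynomial.X
      + Polynomial.C (C s * extZ (genFamF v) (b - 2)) * Polynomial.X ^ 2 := by
  have h := transl_genSer c v (K := linSer Polynomial.X * linSer (Polynomial.C (C s) *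
    Polynomial.X)) (L := (PowerSeries.mk fun n => -Polynomial.X ^ (n + 1)) +
      (PowerSeries.mk fun n => -(Polynomial.C (C s) * Polynomial.X) ^ (n + 1)))
    (ode_mul (linSer_ode _) (linSer_ode _))
    (by rw [map_mul, constantCoeff_linSer, constantCoeff_linSer, mul_one])
    (by
      intro n
      rw [map_add, PowerSeries.coeff_mk, PowerSeries.coeff_mk, hs]
      simp only [map_neg, map_add, map_one, map_pow]
      ring)
  by_cases hb : 0 ≤ b
  · obtain ⟨n, rfl⟩ := Int.eq_ofNat_of_zero_le hb
    have hn := congrArg (PowerSeries.coeff n) h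
    have hexp : linSer (Polynomial.X : Polynomial LamF) * linSer (Polynomial.C (C s) *
        Polynomial.X) = 1 - PowerSeries.C (Polynomial.C (C (1 + s)) * Polynomial.X) *
          PowerSeries.X + PowerSeries.C (Polynomial.C (C s) * Polynomial.X ^ 2) *
            PowerSeries.X ^ 2 := by
      simp only [linSer, map_mul, map_add, map_one, map_pow]
      ring
    rw [hexp, mul_add, mul_sub, mul_one, ← mul_assoc, ← mul_assoc, map_add, map_sub,
      PowerSeries.coeff_map, PowerSeries.coeff_map] at hn
    simp only [genSer, PowerSeries.coeff_mk] at hn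
    have e0 : extZ (genFamF v) (n : ℤ) = genFamF v n := by simp [extZ]
    rw [e0]
    refine hn.trans ?_
    match n with
    | 0 => simp [extZ, PowerSeries.coeff_mul_X_pow']
    | 1 =>
      rw [PowerSeries.coeff_mul_X_pow', show (1 : ℕ) = 0 + 1 from rfl,
        PowerSeries.coeff_succ_mul_X, PowerSeries.coeff_mul_C, PowerSeries.coeff_map,
        PowerSeries.coeff_mk]
      simp [extZ]
      ring
    | n + 2 =>
      have e1 : extZ (genFamF v) (((n + 2 : ℕ) : ℤ) - 1) = genFamF v (n + 1) := by
        rw [show (((n + 2 : ℕ) : ℤ) - 1) = ((n + 1 : ℕ) : ℤ) by push_cast; ring]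
        simp only [extZ, Int.natCast_nonneg, if_true, Int.toNat_natCast]
      have e2 : extZ (genFamF v) (((n + 2 : ℕ) : ℤ) - 2) = genFamF v n := by
        rw [show (((n + 2 : ℕ) : ℤ) - 2) = (n : ℤ) by push_cast; ring]
        simp only [extZ, Int.natCast_nonneg, if_true, Int.toNat_natCast]
      rw [e1, e2, PowerSeries.coeff_mul_X_pow, PowerSeries.coeff_succ_mul_X,
        PowerSeries.coeff_mul_C, PowerSeries.coeff_mul_C]
      simp only [PowerSeries.coeff_map, PowerSeries.coeff_mk, map_mul]
      ring
  · have e : ∀ k : ℤ, k ≤ b → extZ (genFamF v) k = 0 := fun k hk => if_neg (by omega)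
    rw [e b le_rfl, e (b - 1) (by omega), e (b - 2) (by omega)]
    simp

/-- Translation is integral as soon as it is so on the generators `h_k`. -/
lemma transl_mem_lifts (c : ℕ → Fq)
    (h : ∀ k, transl c (hhF k) ∈ (Polynomial.mapRingHom intRing.subtype).range) {P : LamF}
    (hP : P ∈ intRing) : transl c P ∈ (Polynomial.mapRingHom intRing.subtype).range := by
  have hq : ∀ k : ℤ, transl c (C (qq ^ k)) ∈ (Polynomial.mapRingHom intRing.subtype).range :=
    fun k => ⟨Polynomial.C ⟨C (qq ^ k), C_zpow_mem k⟩, by simp⟩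
  have : intRing ≤ (Polynomial.mapRingHom intRing.subtype).range.comap (transl c).toRingHom := by
    refine Subring.closure_le.2 ?_
    rintro _ (⟨k, rfl⟩ | rfl | rfl)
    · exact h k
    · simpa using hq 1
    · simpa using hq (-1)
  exact this hP

lemma transl_one_hhF (k : ℕ) :
    transl (fun _ => 1) (hhF k) ∈ (Polynomial.mapRingHom intRing.subtype).range := by
  have h := transl_genSer (fun _ => 1) (fun _ => 1)
    (K := PowerSeries.mk fun n => Polynomial.X ^ n)
    (L := PowerSeries.mk fun n => Polynomial.X ^ (n + 1))
    (by
      refine PowerSeries.ext fun n => ?_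
      rw [PowerSeries.coeff_derivative, PowerSeries.coeff_mul]
      simp only [PowerSeries.coeff_mk]
      rw [Finset.sum_congr rfl (g := fun _ => Polynomial.X ^ (n + 1))]
      · simp [mul_comm]
      · intro p hp
        rw [← pow_add]
        have := Finset.HasAntidiagonal.mem_antidiagonal.1 hp
        congr 1
        omega)
    (by rw [← PowerSeries.coeff_zero_eq_constantCoeff_apply]; simp) (by simp)
  have hk := congrArg (PowerSeries.coeff k) h
  rw [PowerSeries.coeff_map, PowerSeries.coeff_mul] at hk
  simp only [genSer, PowerSeries.coeff_mk, PowerSeries.coeff_map] at hk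
  refine (congrArg (· ∈ _) hk).mpr (sum_mem fun p _ => mul_mem ?_ (pow_mem ?_ _))
  · exact ⟨Polynomial.C ⟨hhF p.1, hhF_mem _⟩, by simp [hhF]⟩
  · exact ⟨Polynomial.X, by simp⟩

lemma transl_neg_hhF (k : ℕ) :
    transl (fun n => -(qq⁻¹) ^ n) (hhF k) ∈ (Polynomial.mapRingHom intRing.subtype).range := by
  have h := transl_genSer (fun n => -(qq⁻¹) ^ n) (fun _ => 1)
    (linSer_ode (Polynomial.C (C qq⁻¹) * Polynomial.X)) (constantCoeff_linSer _)
    (by intro n; rw [PowerSeries.coeff_mk, mul_pow, one_mul, map_neg, map_neg, map_pow, map_pow]; ring)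
  have hk := congrArg (PowerSeries.coeff k) h
  have hC : ∀ k, Polynomial.C (hhF k) ∈ (Polynomial.mapRingHom intRing.subtype).range :=
    fun k => ⟨Polynomial.C ⟨hhF k, hhF_mem _⟩, by simp⟩
  rw [linSer, mul_sub, mul_one, ← mul_assoc, map_sub, PowerSeries.coeff_map] at hk
  rw [genSer, PowerSeries.coeff_mk] at hk
  refine (congrArg (· ∈ (Polynomial.mapRingHom intRing.subtype).range) hk).mpr (sub_mem ?_ ?_)
  · rw [PowerSeries.coeff_map, PowerSeries.coeff_mk]
    exact hC k
  · cases k with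
    | zero => simp
    | succ k =>
      rw [PowerSeries.coeff_succ_mul_X, PowerSeries.coeff_mul_C, PowerSeries.coeff_map,
        PowerSeries.coeff_mk]
      refine mul_mem (hC k) (mul_mem ?_ ⟨Polynomial.X, by simp⟩)
      have := C_zpow_mem (-1)
      rw [zpow_neg_one] at this
      exact ⟨Polynomial.C ⟨_, this⟩, by simp⟩

/-! ### Schur functions span the integral form -/

/-- The Leibniz expansion of the Jacobi–Trudi determinant is unitriangular: for `μ` decreasing,
every term other than `h_μ` is zero or a product `h_ν` with `∑ ν_i = ∑ μ_i` and
`∑ ν_i² > ∑ μ_i²`, by the rearrangement inequality. -/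
lemma jacobiTrudi_term {l : ℕ} (μ : Fin l → ℕ) (hμ : Antitone μ) (σ : Equiv.Perm (Fin l))
    (hσ : σ ≠ 1) : (∏ i, hZF ((μ (σ i) : ℤ) - ((σ i).1 : ℤ) + (i.1 : ℤ))) = 0 ∨
      ∃ ν : Fin l → ℕ, (∏ i, hZF ((μ (σ i) : ℤ) - ((σ i).1 : ℤ) + (i.1 : ℤ))) = ∏ i, hhF (ν i) ∧
        ∑ i, ν i = ∑ i, μ i ∧ ∑ i, μ i ^ 2 < ∑ i, ν i ^ 2 := by
  by_cases hneg : ∃ i, ((μ (σ i) : ℤ) - ((σ i).1 : ℤ) + (i.1 : ℤ)) < 0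
  · obtain ⟨i, hi⟩ := hneg
    exact Or.inl (Finset.prod_eq_zero (Finset.mem_univ i) (if_neg (by omega)))
  · push Not at hneg
    right
    choose ν hν using fun i => Int.eq_ofNat_of_zero_le (hneg i)
    have hsum : ∑ i, ν i = ∑ i, μ i := by
      have h1 : ∑ i, (ν i : ℤ) = ∑ i, (μ i : ℤ) := by
        have e1 := Equiv.sum_comp σ fun i => (μ i : ℤ)
        have e2 := Equiv.sum_comp σ fun i : Fin l => (i.1 : ℤ)
        calc ∑ i, (ν i : ℤ) = ∑ i, ((μ (σ i) : ℤ) - ((σ i).1 : ℤ) + (i.1 : ℤ)) :=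
              Finset.sum_congr rfl fun i _ => (hν i).symm
          _ = _ := by rw [Finset.sum_add_distrib, Finset.sum_sub_distrib, e1, e2]; ring
      exact_mod_cast h1
    refine ⟨ν, Finset.prod_congr rfl fun i _ => ?_, hsum, ?_⟩
    · rw [hν i]; simp [hZF]
    · have hanti : Antivary (fun i => (μ i : ℤ)) (fun i : Fin l => (i.1 : ℤ)) := by
        intro i j hij
        have : i ≤ j := by
          rw [Fin.le_def]
          have hij' : (i.1 : ℤ) < (j.1 : ℤ) := hij
          omega
        change (μ j : ℤ) ≤ (μ i : ℤ)
        exact_mod_cast hμ this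
      have hrear := hanti.sum_mul_le_sum_comp_perm_mul (σ := σ)
      have hpos : 0 < ∑ i, ((i.1 : ℤ) - ((σ i).1 : ℤ)) ^ 2 := by
        obtain ⟨i, hi⟩ : ∃ i, σ i ≠ i := by
          by_contra hcon
          push Not at hcon
          exact hσ (Equiv.ext hcon)
        refine Finset.sum_pos' (fun _ _ => sq_nonneg _) ⟨i, Finset.mem_univ _, ?_⟩
        have hne : (i.1 : ℤ) - ((σ i).1 : ℤ) ≠ 0 := by
          intro h
          exact hi (Fin.ext (by omega))
        positivity
      have e1 := Equiv.sum_comp σ fun i => (μ i : ℤ) ^ 2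
      have e2 := Equiv.sum_comp σ fun i : Fin l => (μ i : ℤ) * (i.1 : ℤ)
      have hexp : ∑ i, (ν i : ℤ) ^ 2 = ∑ i, (μ i : ℤ) ^ 2 + 2 * (∑ i, (μ (σ i) : ℤ) * (i.1 : ℤ) -
          ∑ i, (μ i : ℤ) * (i.1 : ℤ)) + ∑ i, ((i.1 : ℤ) - ((σ i).1 : ℤ)) ^ 2 := by
        rw [← e1, ← e2, ← Finset.sum_sub_distrib, Finset.mul_sum, ← Finset.sum_add_distrib,
          ← Finset.sum_add_distrib]
        refine Finset.sum_congr rfl fun i _ => ?_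
        have : (ν i : ℤ) = (μ (σ i) : ℤ) - ((σ i).1 : ℤ) + (i.1 : ℤ) := (hν i).symm
        rw [this]
        ring
      have : ∑ i, (μ i : ℤ) ^ 2 < ∑ i, (ν i : ℤ) ^ 2 := by
        rw [hexp]
        linarith
      exact_mod_cast this

lemma sum_sq_le_sq {l : ℕ} (μ : Fin l → ℕ) : ∑ i, μ i ^ 2 ≤ (∑ i, μ i) ^ 2 := by
  rw [sq, Finset.sum_mul]
  refine Finset.sum_le_sum fun i _ => ?_
  rw [sq]
  exact Nat.mul_le_mul_left _ (Finset.single_le_sum (fun _ _ => Nat.zero_le _) (Finset.mem_univ i))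

/-- Products of complete symmetric functions lie in the lattice, by induction on
`(∑ μ_i)² - ∑ μ_i²`. -/
lemma prod_hhF_mem (k m : ℤ) (N : ℕ) : ∀ (l : ℕ) (μ : Fin l → ℕ),
    (∑ i, μ i) ^ 2 - ∑ i, μ i ^ 2 = N →
      qq ^ k • Finsupp.single m (∏ i, hhF (μ i)) ∈ SchurLattice := by
  induction N using Nat.strong_induction_on with
  | _ N ih =>
    intro l
    have key : ∀ μ : Fin l → ℕ, Antitone μ → (∑ i, μ i) ^ 2 - ∑ i, μ i ^ 2 = N →
        qq ^ k • Finsupp.single m (∏ i, hhF (μ i)) ∈ SchurLattice := by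
      intro μ hμ hN
      let f : LamF →+ W :=
        (DistribSMul.toAddMonoidHom W (qq ^ k)).comp (Finsupp.singleAddHom m)
      change ∏ i, hhF (μ i) ∈ SchurLattice.comap f
      have hs : schurF (fun a => (μ a : ℤ)) ∈ SchurLattice.comap f :=
        AddSubgroup.subset_closure ⟨k, m, l, μ, hμ, rfl⟩
      have hdet : schurF (fun a => (μ a : ℤ)) = ∏ i, hhF (μ i) +
          ∑ σ ∈ Finset.univ.erase (1 : Equiv.Perm (Fin l)), Equiv.Perm.sign σ •
            ∏ i, hZF ((μ (σ i) : ℤ) - ((σ i).1 : ℤ) + (i.1 : ℤ)) := by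
        rw [schurF, Matrix.det_apply, ← Finset.add_sum_erase _ _ (Finset.mem_univ 1)]
        congr 1
        simp [hZF]
      rw [eq_sub_of_add_eq hdet.symm]
      refine sub_mem hs (sum_mem fun σ hσ => ?_)
      have hterm : ∏ i, hZF ((μ (σ i) : ℤ) - ((σ i).1 : ℤ) + (i.1 : ℤ)) ∈
          SchurLattice.comap f := by
        rcases jacobiTrudi_term μ hμ σ (Finset.ne_of_mem_erase hσ) with h0 | ⟨ν, h1, h2, h3⟩
        · rw [h0]; exact zero_mem _
        · rw [h1]
          refine ih _ ?_ l ν rfl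
          have := sum_sq_le_sq ν
          rw [h2] at this ⊢
          omega
      rcases Int.units_eq_one_or (Equiv.Perm.sign σ) with h | h <;> rw [h]
      · simpa using hterm
      · simpa using neg_mem hterm
    intro μ hN
    let τ : Equiv.Perm (Fin l) := Fin.revPerm.trans (Tuple.sort μ)
    have h1 := Equiv.sum_comp τ μ
    have h2 := Equiv.sum_comp τ fun i => μ i ^ 2
    have h3 := Equiv.prod_comp τ fun i => hhF (μ i)
    rw [← h3]
    refine key (fun i => μ (τ i)) ?_ (by rw [h1, h2, hN])
    exact (Tuple.monotone_sort μ).comp_antitone Fin.rev_anti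

lemma single_mem {P : LamF} (hP : P ∈ intRing) (m : ℤ) : Finsupp.single m P ∈ SchurLattice := by
  rw [intRing, Subring.mem_closure_iff] at hP
  refine AddSubgroup.closure_induction
    (p := fun P _ => Finsupp.single m P ∈ SchurLattice) ?_ ?_ ?_ ?_ hP
  · intro P hP
    have : ∃ (k : ℤ) (L : List ℕ), P = qq ^ k • (L.map hhF).prod := by
      refine Submonoid.closure_induction
        (motive := fun P _ => ∃ (k : ℤ) (L : List ℕ), P = qq ^ k • (L.map hhF).prod) ?_ ?_ ?_ hP
      · rintro _ (⟨n, rfl⟩ | rfl | rfl)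
        · exact ⟨0, [n], by simp⟩
        · exact ⟨1, [], by simp [MvPolynomial.smul_eq_C_mul]⟩
        · exact ⟨-1, [], by simp [MvPolynomial.smul_eq_C_mul]⟩
      · exact ⟨0, [], by simp⟩
      · rintro _ _ _ _ ⟨k, L, rfl⟩ ⟨k', L', rfl⟩
        refine ⟨k + k', L ++ L', ?_⟩
        rw [List.map_append, List.prod_append, zpow_add₀ qq_ne_zero, smul_mul_smul_comm]
    obtain ⟨k, L, rfl⟩ := this
    have h := prod_hhF_mem k m _ L.length (fun i => L.get i) rfl
    rwa [← Finsupp.smul_single, ← Fin.prod_univ_fun_getElem]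
  · simp
  · intro x y _ _ hx hy
    rw [Finsupp.single_add]
    exact add_mem hx hy
  · intro x _ hx
    rw [Finsupp.single_neg]
    exact neg_mem hx

lemma mem_lattice_iff {w : W} : w ∈ SchurLattice ↔ ∀ m, w m ∈ intRing := by
  constructor
  · intro hw
    refine AddSubgroup.closure_induction (p := fun w _ => ∀ m, w m ∈ intRing) ?_ ?_ ?_ ?_ hw
    · rintro _ ⟨k, m, l, lam, -, rfl⟩ m'
      rw [Finsupp.smul_apply, Finsupp.single_apply]
      split_ifs
      · refine zpow_smul_mem k ?_
        rw [schurF, Matrix.det_apply]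
        refine sum_mem fun σ _ => ?_
        have : (∏ i, (Matrix.of fun i j : Fin l =>
            hZF ((lam i : ℤ) - (i.1 : ℤ) + (j.1 : ℤ))) (σ i) i) ∈ intRing :=
          prod_mem fun i _ => hZF_mem _
        rcases Int.units_eq_one_or (Equiv.Perm.sign σ) with h | h <;> rw [h]
        · simpa using this
        · simpa using neg_mem this
      · simp
    · simp
    · intro x y _ _ hx hy m
      exact add_mem (hx m) (hy m)
    · intro x _ hx m
      exact neg_mem (hx m)
  · intro h
    rw [← Finsupp.sum_single w]
    exact sum_mem fun m _ => single_mem (h m) m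

/-! ### Contracting variables against a sequence -/

/-- The `Λ`-linear map `Λ[u] → Λ` sending `u^j` to `V (k + j)`. -/
def psi1 (V : ℤ → LamF) (k : ℤ) : Polynomial LamF →ₗ[LamF] LamF :=
  Polynomial.lsum fun j => LinearMap.toSpanSingleton LamF LamF (V (k + j))

lemma psi1_monomial (V : ℤ → LamF) (k : ℤ) (j : ℕ) (Q : LamF) :
    psi1 V k (Polynomial.monomial j Q) = Q * V (k + j) := by
  simp [psi1, Polynomial.lsum_apply, Polynomial.sum_monomial_index]

/-- The `Λ`-linear map `Λ[z₁,…,z_r] → Λ` sending `z^j` to `∏ V (a_i + j_i)`. -/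
def psi (V : ℤ → LamF) {r : ℕ} (a : Fin r → ℤ) : MvPolynomial (Fin r) LamF →ₗ[LamF] LamF :=
  (basisMonomials (Fin r) LamF).constr LamF fun j => ∏ i, V (a i + j i)

lemma psi_monomial (V : ℤ → LamF) {r : ℕ} (a : Fin r → ℤ) (j : Fin r →₀ ℕ) (Q : LamF) :
    psi V a (monomial j Q) = Q * ∏ i, V (a i + j i) := by
  have h : monomial j Q = Q • basisMonomials (Fin r) LamF j := by
    rw [coe_basisMonomials, smul_monomial, smul_eq_mul, mul_one]
  rw [h, map_smul, psi, Module.Basis.constr_basis, smul_eq_mul]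

lemma psi_shift (V : ℤ → LamF) {r : ℕ} (a : Fin r → ℤ) (e : Fin r →₀ ℕ)
    (G : MvPolynomial (Fin r) LamF) :
    psi V a (monomial e 1 * G) = psi V (fun i => a i + e i) G := by
  induction G using MvPolynomial.induction_on' with
  | monomial j Q =>
    rw [monomial_mul, one_mul, psi_monomial, psi_monomial]
    simp [add_assoc]
  | add p q hp hq => rw [mul_add, map_add, map_add, hp, hq]

lemma psi_rename (V : ℤ → LamF) {r : ℕ} (a : Fin r → ℤ) (σ : Equiv.Perm (Fin r))
    (G : MvPolynomial (Fin r) LamF) : psi V a (rename σ G) = psi V (a ∘ σ) G := by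
  induction G using MvPolynomial.induction_on' with
  | monomial j Q =>
    rw [rename_monomial, psi_monomial, psi_monomial, ← Equiv.prod_comp σ]
    congr 1
    refine Finset.prod_congr rfl fun i _ => ?_
    rw [Finsupp.mapDomain_apply σ.injective, Function.comp_apply]
  | add p q hp hq => rw [map_add, map_add, map_add, hp, hq]

/-- The embedding `Λ[u] → Λ[z₀,…,z_r]`, `u ↦ z₀`. -/
def embU (r : ℕ) : Polynomial LamF →ₐ[LamF] MvPolynomial (Fin (r + 1)) LamF :=
  Polynomial.aeval (X 0)

lemma monomial_cons_eq {r : ℕ} (n : ℕ) (e : Fin r →₀ ℕ) :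
    (monomial (Finsupp.cons n e) 1 : MvPolynomial (Fin (r + 1)) LamF) =
      X 0 ^ n * ∏ i, X i.succ ^ e i := by
  rw [monomial_eq, C_1, one_mul, Finsupp.prod_fintype _ _ (by simp), Fin.prod_univ_succ]
  simp

lemma psi_cons (V : ℤ → LamF) {r : ℕ} (k : ℤ) (a : Fin r → ℤ) (H : Polynomial LamF)
    (e : Fin r → ℕ) :
    psi V (Fin.cons k a : Fin (r + 1) → ℤ) (embU r H * ∏ i, X i.succ ^ e i) =
      psi1 V k H * ∏ i, V (a i + e i) := by
  induction H using Polynomial.induction_on' with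
  | add p q hp hq => rw [map_add, add_mul, map_add, map_add, add_mul, hp, hq]
  | monomial n Q =>
    have h : embU r (Polynomial.monomial n Q) * ∏ i, X i.succ ^ e i =
        Q • monomial (Finsupp.cons n (Finsupp.equivFunOnFinite.symm e)) 1 := by
      rw [monomial_cons_eq, embU, Polynomial.aeval_monomial, MvPolynomial.smul_eq_C_mul,
        MvPolynomial.algebraMap_eq, mul_assoc]
      rfl
    rw [h, map_smul, psi_monomial, psi1_monomial, Fin.prod_univ_succ, smul_eq_mul]
    simp only [Fin.cons_zero, Fin.cons_succ, Finsupp.cons_zero, Finsupp.cons_succ,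
      Finsupp.equivFunOnFinite_symm_apply_apply, one_mul, mul_assoc]

/-! ### Normal ordering -/

/-- The algebra map `p_n ↦ p_n + c_n ∑ z_iⁿ` from `Λ` to `Λ[z₁,…,z_r]`: the joint annihilation
part of a product of `r` currents. -/
def translN (c : ℕ → Fq) (r : ℕ) : LamF →ₐ[Fq] MvPolynomial (Fin r) LamF :=
  aeval fun n => C (X n) + ∑ i, C (C (c n)) * X i ^ (n : ℕ)

/-- Applies `transl c`, with new variable `z₀`, to the coefficients of a polynomial in
`z₁,…,z_r`. -/
def combine (c : ℕ → Fq) (r : ℕ) :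
    MvPolynomial (Fin r) LamF →+* MvPolynomial (Fin (r + 1)) LamF :=
  eval₂Hom ((embU r).toRingHom.comp (transl c).toRingHom) fun i => X i.succ

lemma combine_C (c : ℕ → Fq) (r : ℕ) (Q : LamF) :
    combine c r (C Q) = embU r (transl c Q) := by
  simp [combine]

lemma combine_X (c : ℕ → Fq) (r : ℕ) (i : Fin r) : combine c r (X i) = X i.succ := by
  simp [combine]

lemma combine_monomial (c : ℕ → Fq) (r : ℕ) (j : Fin r →₀ ℕ) (Q : LamF) :
    combine c r (monomial j Q) = embU r (transl c Q) * ∏ i, X i.succ ^ j i := by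
  rw [monomial_eq, map_mul, combine_C, Finsupp.prod_fintype _ _ (by simp), map_prod]
  simp only [map_pow, combine_X]

lemma combine_CC (c : ℕ → Fq) (r : ℕ) (x : Fq) : combine c r (C (C x)) = C (C x) := by
  rw [combine_C, transl_C, embU, Polynomial.aeval_C, MvPolynomial.algebraMap_eq]

lemma combine_translN (c : ℕ → Fq) (r : ℕ) (P : LamF) :
    combine c r (translN c r P) = translN c (r + 1) P := by
  have h : (combine c r).comp (translN c r).toRingHom = (translN c (r + 1)).toRingHom := by
    refine MvPolynomial.ringHom_ext (fun x => ?_) fun n => ?_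
    · have e : ∀ r, translN c r (C x) = C (C x) := fun r => (translN c r).commutes x
      simp only [AlgHom.toRingHom_eq_coe, RingHom.comp_apply, RingHom.coe_coe, e, combine_CC]
    · simp only [AlgHom.toRingHom_eq_coe, RingHom.comp_apply, RingHom.coe_coe, translN, aeval_X,
        map_add, map_sum, map_mul, map_pow, combine_X, combine_C, transl_X]
      rw [Fin.sum_univ_succ]
      simp [embU, add_assoc]
  exact congrArg (fun f : LamF →+* _ => f P) h

lemma translN_zero (c : ℕ → Fq) (P : LamF) : translN c 0 P = C P := by
  have : (translN c 0).toRingHom = (C : LamF →+* MvPolynomial (Fin 0) LamF) := by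
    refine MvPolynomial.ringHom_ext (fun x => ?_) fun n => ?_
    · exact (translN c 0).commutes x
    · simp [translN]
  exact congrArg (fun f : LamF →+* _ => f P) this

lemma translN_rename (c : ℕ → Fq) (r : ℕ) (σ : Equiv.Perm (Fin r)) (P : LamF) :
    rename σ (translN c r P) = translN c r P := by
  have h : (rename σ : MvPolynomial (Fin r) LamF →ₐ[LamF] _).toRingHom.comp
      (translN c r).toRingHom = (translN c r).toRingHom := by
    refine MvPolynomial.ringHom_ext (fun x => ?_) fun n => ?_
    · have e : translN c r (C x) = C (C x) := (translN c r).commutes x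
      simp [e]
    · simp only [AlgHom.toRingHom_eq_coe, RingHom.comp_apply, RingHom.coe_coe, translN, aeval_X,
        map_add, map_sum, map_mul, map_pow, rename_C, rename_X]
      rw [Equiv.sum_comp σ fun i => C (C (c n)) * (X i : MvPolynomial (Fin r) LamF) ^ (n : ℕ)]
  exact congrArg (fun f : LamF →+* _ => f P) h

/-- The operator `P ↦ ∑_j V (k + j) · [u^j] (transl c P)`: one mode of a current. -/
def xop (c : ℕ → Fq) (V : ℤ → LamF) (k : ℤ) (P : LamF) : LamF := psi1 V k (transl c P)

/-- The contraction factor `(z_j - z_i)(z_j - s z_i)` of two currents. -/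
def contr {r : ℕ} (s : Fq) (i j : Fin r) : MvPolynomial (Fin r) LamF :=
  (X j - X i) * (X j - C (C s) * X i)

/-- Coefficients of `(z - u)(z - s u)` in powers of `z`. -/
def contrCoeff (s : Fq) : Fin 3 → Fq := ![s, -(1 + s), 1]

lemma contr_eq {r : ℕ} (s : Fq) (i j : Fin r) : contr s i j =
    ∑ e : Fin 3, C (C (contrCoeff s e)) * X i ^ (2 - e.1) * X j ^ e.1 := by
  simp only [Fin.sum_univ_three, contrCoeff, contr]
  simp
  ring

lemma transl_extZ_sum (c v : ℕ → Fq) (s : Fq) (hs : ∀ n, v n * c n = -(1 + s ^ n)) (b : ℤ) :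
    transl c (extZ (genFamF v) b) = ∑ e : Fin 3,
      (C (contrCoeff s e) * extZ (genFamF v) (b - 2 + (e.1 : ℕ))) •
        (Polynomial.X : Polynomial LamF) ^ (2 - e.1) := by
  rw [transl_extZ c v s hs, Fin.sum_univ_three]
  have e1 : b - 2 + 1 = b - 1 := by ring
  simp [contrCoeff, e1, Polynomial.smul_eq_C_mul]
  ring

lemma psi1_mul_prod (c v : ℕ → Fq) (s : Fq) (hs : ∀ n, v n * c n = -(1 + s ^ n)) {r : ℕ} (k : ℤ)
    (b : Fin r → ℤ) (H : Polynomial LamF) :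
    psi1 (extZ (genFamF v)) k (H * ∏ i, transl c (extZ (genFamF v) (b i))) =
      psi (extZ (genFamF v)) (Fin.cons k fun i => b i - 2 : Fin (r + 1) → ℤ)
        (embU r H * ∏ i : Fin r, contr s 0 i.succ) := by
  simp only [contr_eq, transl_extZ_sum c v s hs, Finset.prod_univ_sum, Finset.mul_sum, map_sum]
  refine Finset.sum_congr rfl fun e _ => ?_
  have h1 : embU r H * ∏ i : Fin r, (C (C (contrCoeff s (e i))) * X 0 ^ (2 - (e i).1) *
      X i.succ ^ (e i).1) = (∏ i, C (contrCoeff s (e i)) : LamF) •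
        (embU r (H * Polynomial.X ^ ∑ i, (2 - (e i).1)) * ∏ i, X i.succ ^ (e i).1) := by
    rw [MvPolynomial.smul_eq_C_mul, map_prod, map_mul, map_pow, Finset.prod_mul_distrib,
      Finset.prod_mul_distrib, Finset.prod_pow_eq_pow_sum]
    simp only [embU, Polynomial.aeval_X]
    ring
  have h2 : H * ∏ i, (C (contrCoeff s (e i)) * extZ (genFamF v) (b i - 2 + ((e i).1 : ℕ))) •
      (Polynomial.X : Polynomial LamF) ^ (2 - (e i).1) =
        (∏ i, (C (contrCoeff s (e i)) * extZ (genFamF v) (b i - 2 + ((e i).1 : ℕ)))) •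
          (H * Polynomial.X ^ ∑ i, (2 - (e i).1)) := by
    simp only [Polynomial.smul_eq_C_mul]
    rw [Finset.prod_mul_distrib, Finset.prod_pow_eq_pow_sum, map_prod]
    ring
  rw [h1, h2, map_smul, map_smul, psi_cons, smul_eq_mul, smul_eq_mul, Finset.prod_mul_distrib]
  ring

/-- Moving one more current to the left of a normally ordered product. -/
lemma xop_psi (c v : ℕ → Fq) (s : Fq) (hs : ∀ n, v n * c n = -(1 + s ^ n)) {r : ℕ} (k : ℤ)
    (a : Fin r → ℤ) (G : MvPolynomial (Fin r) LamF) :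
    xop c (extZ (genFamF v)) k (psi (extZ (genFamF v)) a G) =
      psi (extZ (genFamF v)) (Fin.cons k fun i => a i - 2 : Fin (r + 1) → ℤ)
        ((∏ i : Fin r, contr s 0 i.succ) * combine c r G) := by
  induction G using MvPolynomial.induction_on' with
  | add p q hp hq =>
    rw [map_add, map_add, mul_add, map_add, ← hp, ← hq, xop, map_add, map_add]
    rfl
  | monomial j Q =>
    rw [psi_monomial, xop, map_mul, map_prod, psi1_mul_prod c v s hs, combine_monomial]
    have h := psi_shift (extZ (genFamF v)) (Fin.cons k fun i => a i - 2 : Fin (r + 1) → ℤ)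
      (Finsupp.cons 0 j) (embU r (transl c Q) * ∏ i : Fin r, contr s 0 i.succ)
    rw [monomial_cons_eq, pow_zero, one_mul] at h
    rw [mul_left_comm, ← mul_assoc, mul_comm _ (∏ i, X (Fin.succ i) ^ j i), h]
    congr 2
    funext i
    refine Fin.cases ?_ (fun i => ?_) i
    · simp
    · simp only [Fin.cons_succ, Finsupp.cons_succ]
      ring

/-- The composite `x_{k-2(r-1)} ∘ ⋯ ∘ x_{k-2} ∘ x_k`. -/
def xcomp (c : ℕ → Fq) (V : ℤ → LamF) (k : ℤ) : ℕ → LamF → LamF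
  | 0, P => P
  | r + 1, P => xop c V (k - 2 * r) (xcomp c V k r P)

lemma xcomp_eq (c v : ℕ → Fq) (s : Fq) (hs : ∀ n, v n * c n = -(1 + s ^ n)) (k : ℤ) (P : LamF)
    (r : ℕ) : xcomp c (extZ (genFamF v)) k r P =
      psi (extZ (genFamF v)) (fun _ : Fin r => k - 2 * r + 2)
        ((∏ i : Fin r, ∏ j ∈ Finset.Ioi i, contr s i j) * translN c r P) := by
  induction r with
  | zero =>
    rw [translN_zero, xcomp, Fin.prod_univ_zero, one_mul, C_apply, psi_monomial]
    simp
  | succ r ih =>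
    rw [xcomp, ih, xop_psi c v s hs, map_mul (combine c r), combine_translN, Fin.prod_univ_succ,
      Fin.prod_Ioi_zero, ← mul_assoc, map_prod]
    have h : ∀ i : Fin r, combine c r (∏ j ∈ Finset.Ioi i, contr s i j) =
        ∏ j ∈ Finset.Ioi i.succ, contr s i.succ j := by
      intro i
      rw [Fin.prod_Ioi_succ, map_prod]
      refine Finset.prod_congr rfl fun j _ => ?_
      simp only [contr, map_mul, map_sub, combine_X, combine_CC]
    simp only [h]
    congr 2
    funext i
    refine Fin.cases ?_ (fun i => ?_) i <;> simp <;> ring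

/-! ### Integrality of normally ordered products -/

/-- Polynomials in `r` variables with coefficients in the integral form. -/
def intPoly (r : ℕ) : Subring (MvPolynomial (Fin r) LamF) :=
  (MvPolynomial.map (σ := Fin r) intRing.subtype).range

lemma X_mem_intPoly {r : ℕ} (i : Fin r) : X i ∈ intPoly r := ⟨X i, by simp⟩

lemma C_mem_intPoly {r : ℕ} {P : LamF} (hP : P ∈ intRing) : C P ∈ intPoly r :=
  ⟨C ⟨P, hP⟩, by simp⟩

lemma psi_mem {V : ℤ → LamF} (hV : ∀ k, V k ∈ intRing) {r : ℕ} (a : Fin r → ℤ)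
    {G : MvPolynomial (Fin r) LamF} (hG : G ∈ intPoly r) : psi V a G ∈ intRing := by
  obtain ⟨G, rfl⟩ := hG
  induction G using MvPolynomial.induction_on' with
  | add p q hp hq => rw [map_add, map_add]; exact add_mem hp hq
  | monomial j Q =>
    rw [map_monomial, psi_monomial]
    exact mul_mem Q.2 (prod_mem fun i _ => hV _)

lemma translN_mem (c : ℕ → Fq)
    (hc : ∀ k, transl c (hhF k) ∈ (Polynomial.mapRingHom intRing.subtype).range) {P : LamF}
    (hP : P ∈ intRing) (r : ℕ) : translN c r P ∈ intPoly r := by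
  have hemb : ∀ (r : ℕ) {Q : LamF}, Q ∈ intRing → embU r (transl c Q) ∈ intPoly (r + 1) := by
    intro r Q hQ
    obtain ⟨H, hH⟩ := transl_mem_lifts c hc hQ
    rw [← hH]
    clear hH
    induction H using Polynomial.induction_on' with
    | add p q hp hq => rw [map_add, map_add]; exact add_mem hp hq
    | monomial n Q =>
      rw [Polynomial.coe_mapRingHom, Polynomial.map_monomial, embU, Polynomial.aeval_monomial]
      exact mul_mem (C_mem_intPoly Q.2) (pow_mem (X_mem_intPoly _) _)
  induction r with
  | zero =>
    rw [translN_zero]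
    exact C_mem_intPoly hP
  | succ r ih =>
    rw [← combine_translN]
    obtain ⟨G, hG⟩ := ih
    rw [← hG]
    clear hG
    induction G using MvPolynomial.induction_on' with
    | add p q hp hq => rw [map_add, map_add]; exact add_mem hp hq
    | monomial j Q =>
      rw [map_monomial, combine_monomial]
      exact mul_mem (hemb r Q.2) (prod_mem fun i _ => pow_mem (X_mem_intPoly _) _)

/-! ### Alternating functionals -/

/-- A functional on polynomials in `r` variables which is multiplied by the sign under
permutations of the variables. -/
def IsAlt {r : ℕ} (Φ : MvPolynomial (Fin r) LamF →ₗ[LamF] LamF) : Prop :=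
  ∀ (σ : Equiv.Perm (Fin r)) (f : MvPolynomial (Fin r) LamF),
    Φ (rename σ f) = ((Equiv.Perm.sign σ : ℤ) : LamF) * Φ f

/-- The staircase monomial `∏ z_i^i`. -/
def stairMon (r : ℕ) : MvPolynomial (Fin r) LamF :=
  monomial (Finsupp.equivFunOnFinite.symm fun i => i.1) 1

lemma isAlt_monomial {r : ℕ} (m : Fin r →₀ ℕ) (hm : ∀ i, m i < r) :
    ∃ A : LamF, ∀ Φ : MvPolynomial (Fin r) LamF →ₗ[LamF] LamF, IsAlt Φ →
      Φ (monomial m 1) = A * Φ (stairMon r) := by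
  by_cases hinj : Function.Injective m
  · let g : Fin r → Fin r := fun i => ⟨m i, hm i⟩
    have hg : Function.Injective g := fun i j hij => hinj (Fin.ext_iff.1 hij)
    let τ : Equiv.Perm (Fin r) := Equiv.ofBijective g (Finite.injective_iff_bijective.1 hg)
    refine ⟨((Equiv.Perm.sign τ.symm : ℤ) : LamF), fun Φ hΦ => ?_⟩
    rw [← hΦ, stairMon, rename_monomial]
    congr 3
    ext i
    conv_rhs => rw [← τ.symm_apply_apply i]
    rw [Finsupp.mapDomain_apply τ.symm.injective]
    rfl
  · -- a repeated exponent makes the monomial invariant under a transposition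
    have hinj' : ∃ i j, m i = m j ∧ i ≠ j := by
      simpa [Function.Injective] using hinj
    obtain ⟨i, j, hij, hne⟩ := hinj'
    refine ⟨0, fun Φ hΦ => ?_⟩
    have h := hΦ (Equiv.swap i j) (monomial m 1)
    have hinv : Finsupp.mapDomain (Equiv.swap i j) m = m := by
      ext l
      conv_lhs => rw [← Equiv.swap_apply_self i j l]
      rw [Finsupp.mapDomain_apply (Equiv.swap i j).injective]
      rcases eq_or_ne l i with rfl | hi
      · rw [Equiv.swap_apply_left, hij]
      · rcases eq_or_ne l j with rfl | hj
        · rw [Equiv.swap_apply_right, hij]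
        · rw [Equiv.swap_apply_of_ne_of_ne hi hj]
    rw [rename_monomial, hinv, Equiv.Perm.sign_swap hne] at h
    rw [zero_mul]
    refine self_eq_neg.1 (h.trans ?_)
    simp

/-- On polynomials of degree less than `r` in each of the `r` variables, alternating functionals
are determined by their value on the staircase monomial. -/
lemma isAlt_const {r : ℕ} (f : MvPolynomial (Fin r) LamF)
    (hf : ∀ m ∈ f.support, ∀ i, m i < r) :
    ∃ A : LamF, ∀ Φ : MvPolynomial (Fin r) LamF →ₗ[LamF] LamF, IsAlt Φ →
      Φ f = A * Φ (stairMon r) := by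
  choose! A hA using fun (m : Fin r →₀ ℕ) (hm : ∀ i, m i < r) => isAlt_monomial m hm
  refine ⟨∑ m ∈ f.support, f.coeff m * A m, fun Φ hΦ => ?_⟩
  conv_lhs => rw [f.as_sum]
  rw [map_sum, Finset.sum_mul]
  refine Finset.sum_congr rfl fun m hm => ?_
  have : monomial m (f.coeff m) = f.coeff m • monomial m (1 : LamF) := by
    rw [smul_monomial, smul_eq_mul, mul_one]
  rw [this, map_smul, smul_eq_mul, hA m (hf m hm) Φ hΦ, mul_assoc]

/-! ### The quantum Vandermonde product -/

/-- The product `∏_{i<j} (z_j - z_i)`. -/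
def vdm (r : ℕ) : MvPolynomial (Fin r) LamF := ∏ i : Fin r, ∏ j ∈ Finset.Ioi i, (X j - X i)

/-- The product `∏_{i<j} (z_j - s z_i)`. -/
def qvdm (r : ℕ) (s : Fq) : MvPolynomial (Fin r) LamF :=
  ∏ i : Fin r, ∏ j ∈ Finset.Ioi i, (X j - C (C s) * X i)

lemma vdm_rename {r : ℕ} (σ : Equiv.Perm (Fin r)) :
    rename σ (vdm r) = C ((Equiv.Perm.sign σ : ℤ) : LamF) * vdm r := by
  rw [vdm, ← Matrix.det_vandermonde, map_intCast, ← Matrix.det_permute, AlgHom.map_det]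
  congr 1
  ext i j
  simp [Matrix.vandermonde]

lemma qvdm_degree {r : ℕ} (s : Fq) (m : Fin r →₀ ℕ) (hm : m ∈ (qvdm r s).support) (k : Fin r) :
    m k < r := by
  have h1 : degreeOf k (qvdm r s) ≤
      ∑ i : Fin r, ∑ j ∈ Finset.Ioi i, ((if k = j then 1 else 0) + if k = i then 1 else 0) := by
    refine (degreeOf_prod_le _ _ _).trans (Finset.sum_le_sum fun i _ => ?_)
    refine (degreeOf_prod_le _ _ _).trans (Finset.sum_le_sum fun j _ => ?_)
    refine (degreeOf_sub_le _ _ _).trans (max_le ?_ ?_)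
    · rw [degreeOf_X]; exact Nat.le_add_right _ _
    · refine (degreeOf_C_mul_le _ _ _).trans ?_
      rw [degreeOf_X]; exact Nat.le_add_left _ _
  have h2 : ∑ i : Fin r, ∑ j ∈ Finset.Ioi i, ((if k = j then 1 else 0) + if k = i then 1 else 0) =
      k.1 + (r - 1 - k.1) := by
    simp only [Finset.sum_add_distrib, Finset.sum_ite_eq, Finset.sum_const, smul_eq_mul, mul_ite,
      mul_one, mul_zero, Finset.mem_univ, if_true, Finset.mem_Ioi, Fin.card_Ioi]
    rw [← Finset.card_filter, Finset.filter_gt_eq_Iio, Fin.card_Iio]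
  have h3 := (monomial_le_degreeOf k hm).trans (h1.trans h2.le)
  have := k.2
  omega

/-- The alternating functional `f ↦ ∑ sgn(σ) f(x_{σ 1},…,x_{σ r})`. -/
def altEval {r : ℕ} (x : Fin r → LamF) : MvPolynomial (Fin r) LamF →ₗ[LamF] LamF :=
  ∑ σ : Equiv.Perm (Fin r), ((Equiv.Perm.sign σ : ℤ) : LamF) •
    (aeval (x ∘ σ) : MvPolynomial (Fin r) LamF →ₐ[LamF] LamF).toLinearMap

lemma altEval_apply {r : ℕ} (x : Fin r → LamF) (f : MvPolynomial (Fin r) LamF) :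
    altEval x f = ∑ σ : Equiv.Perm (Fin r), ((Equiv.Perm.sign σ : ℤ) : LamF) *
      aeval (x ∘ σ) f := by
  simp [altEval, LinearMap.sum_apply]

lemma isAlt_altEval {r : ℕ} (x : Fin r → LamF) : IsAlt (altEval x) := by
  intro τ f
  rw [altEval_apply, altEval_apply, Finset.mul_sum]
  refine (Finset.sum_congr rfl fun σ _ => ?_).trans (Equiv.sum_comp (Equiv.mulRight τ) _)
  rw [Equiv.coe_mulRight, aeval_rename, Equiv.Perm.sign_mul, ← mul_assoc, Units.val_mul,
    Int.cast_mul, mul_left_comm, ← Int.cast_mul (_ : ℤ) (_ : ℤ), ← Units.val_mul,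
    Int.units_mul_self, Units.val_one, Int.cast_one, mul_one]
  rfl

lemma altEval_stairMon {r : ℕ} (x : Fin r → LamF) :
    altEval x (stairMon r) = ∏ i : Fin r, ∏ j ∈ Finset.Ioi i, (x j - x i) := by
  rw [altEval_apply, ← Matrix.det_vandermonde, Matrix.det_apply]
  refine Finset.sum_congr rfl fun σ _ => ?_
  rw [stairMon, aeval_monomial, Finsupp.prod_fintype _ _ (by simp)]
  simp [Matrix.vandermonde, Units.smul_def]

/-- At `x_i = t^i` with `t = s⁻¹`, only the identity contributes: any other permutation has a
descent between consecutive values, at which a factor of the product vanishes. -/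
lemma altEval_qvdm {r : ℕ} (s t : Fq) (hst : s * t = 1) :
    altEval (fun i : Fin r => C (t ^ i.1)) (qvdm r s) =
      C (∏ i : Fin r, ∏ j ∈ Finset.Ioi i, (t ^ j.1 - s * t ^ i.1)) := by
  rw [altEval_apply, Finset.sum_eq_single 1]
  · simp [qvdm, map_prod]
  · intro σ _ hσ
    have : ∃ i j : Fin r, i < j ∧ (σ i).1 = (σ j).1 + 1 := by
      by_contra hcon
      push Not at hcon
      refine hσ (inv_eq_one.1 (Equiv.ext fun a => congrFun ?_ a))
      have hmono : StrictMono (σ⁻¹ : Equiv.Perm (Fin r)) := by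
        cases r with
        | zero => intro a; exact a.elim0
        | succ r =>
          refine Fin.strictMono_iff_lt_succ.2 fun a => lt_of_not_ge fun hle => ?_
          refine hcon (σ⁻¹ a.succ) (σ⁻¹ a.castSucc) (lt_of_le_of_ne hle fun h => ?_) (by simp)
          exact absurd (σ⁻¹.injective h) (Fin.castSucc_lt_succ).ne'
      exact hmono.range_inj strictMono_id |>.1 (by simp)
    obtain ⟨i, j, hij, h⟩ := this
    rw [qvdm, map_prod, Finset.prod_eq_zero (Finset.mem_univ i), mul_zero]
    rw [map_prod, Finset.prod_eq_zero (Finset.mem_Ioi.2 hij)]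
    simp only [map_sub, aeval_X, map_mul, Function.comp_apply, aeval_C, Algebra.algebraMap_self,
      RingHom.id_apply]
    rw [h, ← C_mul, pow_succ, mul_comm (t ^ _), ← mul_assoc, hst, one_mul, sub_self]
  · simp

lemma qfact_succ (r : ℕ) :
    qfact (r + 1) = qfact r * ((qq ^ (r + 1) - qq⁻¹ ^ (r + 1)) / (qq - qq⁻¹)) :=
  Finset.prod_range_succ _ _

/-- The value of the quantum Vandermonde product at a geometric progression of ratio `t = s⁻¹` is
the Vandermonde product times a quantum factorial. -/
lemma qvdm_geom (s t : Fq) (hst : s * t = 1) (ε δ : ℤ) (hs : s = qq ^ ε)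
    (ht : ∀ k : ℕ, (t ^ (k + 1) - 1) * (qq - qq⁻¹) =
      (t - 1) * qq ^ (δ * k) * (qq ^ (k + 1) - qq⁻¹ ^ (k + 1))) (ht1 : t - 1 ≠ 0)
    (hq1 : qq - qq⁻¹ ≠ 0) (r : ℕ) : ∃ e : ℤ, ∀ y : Fq,
      ∏ i : Fin r, ∏ j ∈ Finset.Ioi i, (y * t ^ j.1 - s * (y * t ^ i.1)) =
        qq ^ e * qfact r * ∏ i : Fin r, ∏ j ∈ Finset.Ioi i, (y * t ^ j.1 - y * t ^ i.1) := by
  induction r with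
  | zero => exact ⟨0, fun y => by simp [qfact]⟩
  | succ r ih =>
    obtain ⟨e, he⟩ := ih
    refine ⟨e + ε * r + δ * r, fun y => ?_⟩
    have hy := he (y * t)
    rw [Fin.prod_univ_succ, Fin.prod_univ_succ, Fin.prod_Ioi_zero, Fin.prod_Ioi_zero]
    simp only [Fin.prod_Ioi_succ, Fin.val_succ, Fin.val_zero, pow_zero, mul_one]
    have hshift : ∀ n : ℕ, y * t ^ (n + 1) = y * t * t ^ n := fun n => by ring
    simp only [hshift]
    rw [hy]
    have hrow : ∏ j : Fin r, (y * t * t ^ j.1 - s * y) =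
        qq ^ (ε * r + δ * r) * ((qq ^ (r + 1) - qq⁻¹ ^ (r + 1)) / (qq - qq⁻¹)) *
          ∏ j : Fin r, (y * t * t ^ j.1 - y) := by
      rw [Fin.prod_univ_eq_prod_range (fun j => y * t * t ^ j - s * y),
        Fin.prod_univ_eq_prod_range (fun j => y * t * t ^ j - y)]
      have h1 : ∀ j, y * t * t ^ j - s * y = (s * y) * (t ^ (j + 2) - 1) := by
        intro j
        linear_combination (-y * t ^ (j + 1)) * hst
      have h2 : ∀ j, y * t * t ^ j - y = y * (t ^ (j + 1) - 1) := fun j => by ring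
      simp only [h1, h2, Finset.prod_mul_distrib, Finset.prod_const, Finset.card_range]
      have h3 : (t - 1) * ∏ j ∈ Finset.range r, (t ^ (j + 2) - 1) =
          (t ^ (r + 1) - 1) * ∏ j ∈ Finset.range r, (t ^ (j + 1) - 1) := by
        rw [mul_comm, mul_comm (t ^ (r + 1) - 1), ← Finset.prod_range_succ,
          Finset.prod_range_succ' (fun j => t ^ (j + 1) - 1)]
        simp
      have h4 := ht r
      rw [zpow_add₀ qq_ne_zero, zpow_mul qq ε, ← hs, zpow_natCast]
      generalize qq ^ (δ * (r : ℤ)) = Z at *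
      generalize qq - qq⁻¹ = d at *
      generalize qq ^ (r + 1) - qq⁻¹ ^ (r + 1) = n at *
      generalize (∏ j ∈ Finset.range r, (t ^ (j + 2) - 1)) = B at *
      generalize (∏ j ∈ Finset.range r, (t ^ (j + 1) - 1)) = A at *
      have h5 : B * d = Z * n * A := by
        refine mul_left_cancel₀ ht1 ?_
        linear_combination d * h3 + A * h4
      field_simp
      linear_combination s ^ r * y ^ r * h5
    rw [hrow, qfact_succ, add_assoc, zpow_add₀ qq_ne_zero e]
    ring

/-! ### Divided powers -/

lemma qq_pow_injective : Function.Injective fun n : ℕ => qq ^ n := by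
  intro m n h
  have h' : algebraMap (Polynomial ℚ) Fq (Polynomial.X ^ m) =
      algebraMap (Polynomial ℚ) Fq (Polynomial.X ^ n) := by
    simpa [qq, RatFunc.algebraMap_X] using h
  have := congrArg Polynomial.natDegree (RatFunc.algebraMap_injective ℚ h')
  simpa using this

lemma qq_sub_inv_ne_zero : qq - qq⁻¹ ≠ 0 := by
  intro h
  have h2 : qq ^ 2 = qq ^ 0 := by
    rw [sub_eq_zero] at h
    rw [sq, pow_zero]
    nth_rewrite 2 [h]
    exact mul_inv_cancel₀ qq_ne_zero
  exact absurd (qq_pow_injective h2) (by norm_num)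

lemma qfact_ne_zero (r : ℕ) : qfact r ≠ 0 := by
  refine Finset.prod_ne_zero_iff.2 fun k _ => div_ne_zero ?_ qq_sub_inv_ne_zero
  intro h
  have h2 : qq ^ (2 * (k + 1)) = qq ^ 0 := by
    rw [sub_eq_zero] at h
    rw [two_mul, pow_add, pow_zero]
    nth_rewrite 2 [h]
    rw [← mul_pow, mul_inv_cancel₀ qq_ne_zero, one_pow]
  have := qq_pow_injective h2
  omega

/-- The data attached to one of the two currents: the translation parameters `c` (annihilation
part), the exponents `v` (creation part), and the sign `δ`; the contraction parameter is
`s = q^{-2δ}`, and both parts are integral. -/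
structure CurrentData where
  /-- The annihilation part is the translation `p_n ↦ p_n + c_n uⁿ`. -/
  c : ℕ → Fq
  /-- The creation part is `exp (∑ v_n p_n zⁿ / n)`. -/
  v : ℕ → Fq
  /-- The sign of the current. -/
  δ : ℤ
  hδ : δ = 1 ∨ δ = -1
  hs : ∀ n, v n * c n = -(1 + (qq ^ (-2 * δ)) ^ n)
  hv : ∀ k, genFamF v k ∈ intRing
  hc : ∀ k, transl c (hhF k) ∈ (Polynomial.mapRingHom intRing.subtype).range

lemma isAlt_qvdm (δ : ℤ) (hδ : δ = 1 ∨ δ = -1) (r : ℕ) :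
    ∃ e : ℤ, ∀ Φ : MvPolynomial (Fin r) LamF →ₗ[LamF] LamF, IsAlt Φ →
      Φ (qvdm r (qq ^ (-2 * δ))) = C (qq ^ e * qfact r) * Φ (stairMon r) := by
  have hq := qq_ne_zero
  set s := qq ^ (-2 * δ) with hs
  set t := qq ^ (2 * δ) with ht
  have hst : s * t = 1 := by rw [hs, ht, ← zpow_add₀ hq]; simp
  have hinj : Function.Injective fun n : ℕ => t ^ n := by
    intro m n h
    have h' : t ^ m = t ^ n := h
    have : qq ^ (2 * m) = qq ^ (2 * n) := by
      rcases hδ with rfl | rfl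
      · simpa [ht, pow_mul] using h'
      · simp only [ht, mul_neg, mul_one, zpow_neg, inv_pow, inv_inj] at h'
        rw [pow_mul, pow_mul]
        exact_mod_cast h'
    have := qq_pow_injective this
    omega
  have ht1 : t - 1 ≠ 0 := by
    intro h
    have : t ^ 1 = t ^ 0 := by rw [pow_one, pow_zero]; exact sub_eq_zero.1 h
    exact absurd (hinj this) (by norm_num)
  obtain ⟨e, he⟩ := qvdm_geom s t hst (-2 * δ) δ hs (by
    intro k
    rcases hδ with rfl | rfl
    · have : qq ^ (1 * (k : ℤ)) = qq ^ k := by rw [one_mul, zpow_natCast]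
      have ht' : t = qq ^ 2 := by rw [ht]; norm_cast
      rw [this, ht', inv_pow]
      field_simp
      ring
    · have : qq ^ (-1 * (k : ℤ)) = (qq ^ k)⁻¹ := by rw [neg_one_mul, zpow_neg, zpow_natCast]
      have ht' : t = (qq ^ 2)⁻¹ := by rw [ht, mul_neg, mul_one, zpow_neg]; norm_cast
      rw [this, ht', inv_pow, inv_pow]
      field_simp
      ring) ht1 qq_sub_inv_ne_zero r
  refine ⟨e, fun Φ hΦ => ?_⟩
  obtain ⟨A, hA⟩ := isAlt_const (qvdm r s) fun m hm i => qvdm_degree s m hm i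
  have h0 := hA _ (isAlt_altEval fun i : Fin r => C (t ^ i.1))
  have h1 := he 1
  simp only [one_mul] at h1
  rw [altEval_qvdm s t hst, altEval_stairMon, h1] at h0
  simp only [← C_sub, ← map_prod] at h0
  have hne : (C (∏ i : Fin r, ∏ j ∈ Finset.Ioi i, (t ^ j.1 - t ^ i.1)) : LamF) ≠ 0 := by
    rw [Ne, C_eq_zero]
    refine Finset.prod_ne_zero_iff.2 fun i _ => Finset.prod_ne_zero_iff.2 fun j hj => ?_
    intro h
    exact (Finset.mem_Ioi.1 hj).ne' (Fin.ext (hinj (sub_eq_zero.1 h)))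
  rw [C_mul] at h0
  rw [hA Φ hΦ, mul_right_cancel₀ hne h0]

/-- The functional `f ↦ psi (U f)`. -/
def psiMul (V : ℤ → LamF) {r : ℕ} (a : Fin r → ℤ) (U : MvPolynomial (Fin r) LamF) :
    MvPolynomial (Fin r) LamF →ₗ[LamF] LamF :=
  (psi V a).comp (LinearMap.mulLeft LamF U)

lemma psiMul_apply (V : ℤ → LamF) {r : ℕ} (a : Fin r → ℤ) (U f : MvPolynomial (Fin r) LamF) :
    psiMul V a U f = psi V a (U * f) := by
  rw [psiMul, LinearMap.comp_apply, LinearMap.mulLeft_apply]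

/-- With equal modes, the Vandermonde factor makes the normally ordered product alternating. -/
lemma isAlt_psiMul (V : ℤ → LamF) (k : ℤ) (c : ℕ → Fq) (r : ℕ) (P : LamF) :
    IsAlt (psiMul V (fun _ : Fin r => k) (vdm r * translN c r P)) := by
  intro σ f
  have h := psi_rename V (fun _ : Fin r => k) σ (vdm r * translN c r P * f)
  rw [map_mul (rename σ), map_mul (rename σ), vdm_rename, translN_rename, mul_assoc (C _), mul_assoc (C _),
    ← MvPolynomial.smul_eq_C_mul, map_smul, smul_eq_mul] at h
  have hsq : ((Equiv.Perm.sign σ : ℤ) : LamF) * ((Equiv.Perm.sign σ : ℤ) : LamF) = 1 := by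
    rw [← Int.cast_mul, ← Units.val_mul, Int.units_mul_self, Units.val_one, Int.cast_one]
  rw [psiMul_apply, psiMul_apply]
  have hconst : (fun _ : Fin r => k) ∘ σ = fun _ => k := rfl
  rw [hconst] at h
  rw [← h, ← mul_assoc, hsq, one_mul]

/-- The divided power of a current preserves the integral form. -/
lemma xcomp_mem (D : CurrentData) (k : ℤ) (r : ℕ) {P : LamF} (hP : P ∈ intRing) :
    (qfact r)⁻¹ • xcomp D.c (extZ (genFamF D.v)) k r P ∈ intRing := by
  obtain ⟨e, he⟩ := isAlt_qvdm D.δ D.hδ r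
  have hΦ := isAlt_psiMul (extZ (genFamF D.v)) (k - 2 * r + 2) D.c r P
  have hx : xcomp D.c (extZ (genFamF D.v)) k r P =
      psiMul (extZ (genFamF D.v)) (fun _ : Fin r => k - 2 * r + 2) (vdm r * translN D.c r P)
        (qvdm r (qq ^ (-2 * D.δ))) := by
    rw [xcomp_eq D.c D.v _ D.hs, psiMul_apply]
    congr 1
    simp only [contr, Finset.prod_mul_distrib, vdm, qvdm]
    ring
  rw [hx, he _ hΦ, psiMul_apply, MvPolynomial.smul_eq_C_mul, ← mul_assoc, ← C_mul, mul_left_comm,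
    inv_mul_cancel₀ (qfact_ne_zero r), mul_one]
  refine mul_mem (C_zpow_mem e) (psi_mem ?_ _ (mul_mem (mul_mem ?_ ?_) ?_))
  · intro k
    unfold extZ
    split_ifs
    exacts [D.hv _, zero_mem _]
  · exact prod_mem fun i _ => prod_mem fun j _ => sub_mem (X_mem_intPoly _) (X_mem_intPoly _)
  · exact translN_mem D.c D.hc hP r
  · exact ⟨monomial _ 1, by rw [map_monomial, map_one, stairMon]⟩

lemma xop_smul (c : ℕ → Fq) (V : ℤ → LamF) (k : ℤ) (x : Fq) (P : LamF) :
    xop c V k (x • P) = x • xop c V k P := by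
  rw [xop, xop, map_smul, ← algebraMap_smul LamF x (transl c P), map_smul, algebraMap_smul]

lemma xop_add (c : ℕ → Fq) (V : ℤ → LamF) (k : ℤ) (P Q : LamF) :
    xop c V k (P + Q) = xop c V k P + xop c V k Q := by
  rw [xop, map_add, map_add]; rfl

/-- An operator acting as a current mode on each `P e^{mα}`, up to powers of `q` and with modes
decreasing by `2` in each step, has divided powers preserving the lattice. -/
lemma divpow_mem (D : CurrentData) (f : W → W) (d : ℤ) (g K : ℤ → ℤ)
    (hK : ∀ m, K (m + d) = K m - 2)
    (hf : ∀ w, f w = w.sum fun m P => Finsupp.single (m + d)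
      (qq ^ g m • xop D.c (extZ (genFamF D.v)) (K m) P)) (r : ℕ) {w : W}
    (hw : w ∈ SchurLattice) : divpow f r w ∈ SchurLattice := by
  have hsing : ∀ m P, f (Finsupp.single m P) = Finsupp.single (m + d)
      (qq ^ g m • xop D.c (extZ (genFamF D.v)) (K m) P) := by
    intro m P
    rw [hf, Finsupp.sum_single_index]
    simp [xop]
  have hadd : ∀ w w', f (w + w') = f w + f w' := by
    intro w w'
    rw [hf, hf w, hf w', Finsupp.sum_add_index']
    · simp [xop]
    · intro m P Q
      rw [xop_add, smul_add, Finsupp.single_add]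
  let F : AddMonoid.End W := AddMonoidHom.mk' f hadd
  have hiter : ∀ r w, f^[r] w = (F ^ r) w := by
    intro r
    induction r with
    | zero => intro w; rfl
    | succ r ih =>
      intro w
      rw [Function.iterate_succ_apply', ih, pow_succ']
      rfl
  have hpow : ∀ m P (r : ℕ), ∃ e : ℤ, f^[r] (Finsupp.single m P) = Finsupp.single (m + r * d)
      (qq ^ e • xcomp D.c (extZ (genFamF D.v)) (K m) r P) := by
    intro m P r
    have hKr : ∀ r : ℕ, K (m + r * d) = K m - 2 * r := by
      intro r
      induction r with
      | zero => simp
      | succ r ih =>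
        rw [show m + ((r + 1 : ℕ) : ℤ) * d = m + r * d + d by push_cast; ring, hK, ih]
        push_cast
        ring
    induction r with
    | zero => exact ⟨0, by simp [xcomp]⟩
    | succ r ih =>
      obtain ⟨e, he⟩ := ih
      refine ⟨g (m + r * d) + e, ?_⟩
      rw [Function.iterate_succ_apply', he, hsing, xop_smul, smul_smul, hKr,
        ← zpow_add₀ qq_ne_zero, xcomp]
      congr 1
      push_cast
      ring
  rw [divpow, ← Finsupp.sum_single w, Finsupp.sum, hiter, map_sum, Finset.smul_sum]
  refine sum_mem fun m _ => ?_
  rw [← hiter]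
  obtain ⟨e, he⟩ := hpow m (w m) r
  rw [he, Finsupp.smul_single, smul_comm]
  exact single_mem (zpow_smul_mem e (xcomp_mem D _ r (mem_lattice_iff.1 hw m))) _

/-! ### The Chevalley generators -/

/-- The data of the current `X⁺(z)`. -/
def plusData : CurrentData where
  c := fun n => -(qq⁻¹) ^ n
  v := fun n => (1 + qq ^ (2 * n)) * (qq⁻¹) ^ n
  δ := 1
  hδ := Or.inl rfl
  hs := by
    intro n
    have := qq_ne_zero
    have h : (qq ^ (-2 * (1 : ℤ))) ^ n = (qq ^ n)⁻¹ * (qq ^ n)⁻¹ := by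
      rw [mul_one, zpow_neg, inv_pow, ← mul_inv, ← pow_add, ← two_mul, pow_mul]
      norm_cast
    rw [h, inv_pow, two_mul, pow_add]
    field_simp
    ring
  hv := HpF_mem
  hc := transl_neg_hhF

/-- The data of the current `X⁻(z)`. -/
def minusData : CurrentData where
  c := fun _ => 1
  v := fun n => -(1 + qq ^ (2 * n))
  δ := -1
  hδ := Or.inr rfl
  hs := by
    intro n
    have h : (qq ^ (-2 * (-1 : ℤ))) ^ n = qq ^ (2 * n) := by
      rw [pow_mul]
      norm_num
    rw [h, mul_one]
  hv := HmF_mem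
  hc := transl_one_hhF

lemma xop_eq_sum (c : ℕ → Fq) (V : ℤ → LamF) (k : ℤ) (P : LamF) :
    xop c V k P = ∑ j ∈ Finset.range (wboundF P + 1), V (k + j) * DopF (genFamF c j) P := by
  have h := Polynomial.sum_over_range' (transl c P)
    (f := fun j Q => Q * V (k + j)) (fun _ => zero_mul _) (wboundF P + 1)
    (Nat.lt_succ_of_le (natDegree_transl_le c P))
  have h2 : xop c V k P = (transl c P).sum fun j Q => Q * V (k + j) := by
    rw [xop, psi1, Polynomial.lsum_apply]
    simp
  rw [h2, h]
  exact Finset.sum_congr rfl fun j _ => by rw [DopF_genFamF, mul_comm]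

lemma Xp_eq (i n : ℤ) (w : W) : Xp i n w = w.sum fun m P => Finsupp.single (m + 1)
    (xop plusData.c (extZ (genFamF plusData.v)) (-n - 1 - 2 * m - i) P) := by
  refine Finsupp.sum_congr fun m _ => ?_
  rw [xop_eq_sum]
  refine congrArg _ (Finset.sum_congr rfl fun j _ => ?_)
  rw [show -n - 1 - 2 * m - i + (j : ℤ) = (j : ℤ) - n - 1 - 2 * m - i by ring]
  rfl

lemma Xm_eq (i n : ℤ) (w : W) : Xm i n w = w.sum fun m P => Finsupp.single (m + -1)
    (xop minusData.c (extZ (genFamF minusData.v)) (2 * m + i - n - 1) P) := by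
  refine Finsupp.sum_congr fun m _ => ?_
  rw [xop_eq_sum]
  refine congrArg _ (Finset.sum_congr rfl fun j _ => ?_)
  rw [show 2 * m + i - n - 1 + (j : ℤ) = (j : ℤ) + 2 * m + i - n - 1 by ring]
  rfl

lemma che0_eq (i : ℤ) (w : W) : che0 i w = w.sum fun m P => Finsupp.single (m + -1)
    (qq ^ (-1 * (2 * m + i)) •
      xop minusData.c (extZ (genFamF minusData.v)) (2 * m + i - 1 - 1) P) := by
  rw [che0, Xm_eq, qd, Finsupp.sum_sum_index]
  · refine Finsupp.sum_congr fun m _ => ?_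
    rw [Finsupp.sum_single_index (by simp [xop]), xop_smul]
  · simp [xop]
  · intro m P Q
    rw [xop_add, Finsupp.single_add]

lemma chf0_eq (i : ℤ) (w : W) : chf0 i w = w.sum fun m P => Finsupp.single (m + 1)
    (qq ^ (1 * (2 * (m + 1) + i)) •
      xop plusData.c (extZ (genFamF plusData.v)) (-(-1) - 1 - 2 * m - i) P) := by
  rw [chf0, Xp_eq, qd, Finsupp.sum_sum_index]
  · refine Finsupp.sum_congr fun m _ => ?_
    rw [Finsupp.sum_single_index (by simp)]
  · simp
  · intro m P Q
    rw [smul_add, Finsupp.single_add]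

/-- invariance of the Schur lattice under all divided powers of the
Chevalley generators `e₁ = X₀⁺`, `f₁ = X₀⁻`, `e₀ = X₁⁻ ∘ q^{−∂}`, `f₀ = q^∂ ∘ X₋₁⁺`
of the integral form of `U_q(ŝl₂)`: for `i ∈ {0,1}` and `r ≥ 1`,
`e₁^{(r)}(ℒ_i) ⊆ ℒ_i`, `f₁^{(r)}(ℒ_i) ⊆ ℒ_i`, `e₀^{(r)}(ℒ_i) ⊆ ℒ_i`,
`f₀^{(r)}(ℒ_i) ⊆ ℒ_i`. -/
theorem schur_lattice_chevalley_divided_powers (i : ℤ) (hi : i = 0 ∨ i = 1) (r : ℕ)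
    (hr : 1 ≤ r) (w : W) (hw : w ∈ SchurLattice) :
    divpow (che1 i) r w ∈ SchurLattice ∧ divpow (chf1 i) r w ∈ SchurLattice ∧
    divpow (che0 i) r w ∈ SchurLattice ∧ divpow (chf0 i) r w ∈ SchurLattice := by
  refine ⟨?_, ?_, ?_, ?_⟩
  · refine divpow_mem plusData _ 1 (fun _ => 0) (fun m => -0 - 1 - 2 * m - i)
      (fun m => by ring) (fun w => ?_) r hw
    simp only [zpow_zero, one_smul]
    exact Xp_eq i 0 w
  · refine divpow_mem minusData _ (-1) (fun _ => 0) (fun m => 2 * m + i - 0 - 1)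
      (fun m => by ring) (fun w => ?_) r hw
    simp only [zpow_zero, one_smul]
    exact Xm_eq i 0 w
  · exact divpow_mem minusData _ (-1) (fun m => -1 * (2 * m + i))
      (fun m => 2 * m + i - 1 - 1) (fun m => by ring) (che0_eq i) r hw
  · exact divpow_mem plusData _ 1 (fun m => 1 * (2 * (m + 1) + i))
      (fun m => -(-1) - 1 - 2 * m - i) (fun m => by ring) (chf0_eq i) r hw
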